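/- arXiv:2004.07593 — 2 statements merged into one kernel-verified Lean document; each statement's English description precedes it below -/
import Mathlib

section
/- (Stein identity for stable laws with α ∈ (0,1).) Let α ∈ (0,1), m₁, m₂ ∈ [0,∞) with m₁ + m₂ > 0, β ∈ ℝ, and let μ be a Borel probability measure on ℝ whose characteristic function satisfies ∫_ℝ e^{itx} dμ(x) = ψ_α(t) for all t ∈ ℝ. Then for every real-valued Schwartz function g on ℝ, ∫_ℝ [(x - Γ_α) g(x) - m₁ ∫₀^∞ g(x+u) u^{-α} du + m₂ ∫₀^∞ g(x-u) u^{-α} du] dμ(x) = 0, all integrals being absolutely convergent. -/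
open MeasureTheory

/-- The α-stable Lévy measure on ℝ with density
`u ↦ m₁ u^(-α-1) 1_{(0,∞)}(u) + m₂ |u|^(-α-1) 1_{(-∞,0)}(u)` w.r.t. Lebesgue measure. -/
noncomputable def nuStable (α m₁ m₂ : ℝ) : Measure ℝ :=
  (volume : Measure ℝ).withDensity fun u =>
    ENNReal.ofReal (if 0 < u then m₁ * u ^ (-α - 1) else if u < 0 then m₂ * |u| ^ (-α - 1) else 0)

/-- Location parameter `Γ_α = β - (m₁ - m₂) ∫₀^∞ u^{-α}(1+u²)^{-1} du` for `α ∈ (0,1)`. -/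
noncomputable def Gamma01 (α m₁ m₂ β : ℝ) : ℝ :=
  β - (m₁ - m₂) * ∫ u in Set.Ioi (0 : ℝ), u ^ (-α) / (1 + u ^ 2)

/-- Characteristic function of the `α`-stable law, `α ∈ (0,1)`:
`ψ_α(t) = exp(itΓ_α + ∫_ℝ (e^{itu} - 1) ν_α(du))`. -/
noncomputable def psi01 (α m₁ m₂ β : ℝ) (t : ℝ) : ℂ :=
  Complex.exp (Complex.I * t * (Gamma01 α m₁ m₂ β) +
    ∫ u : ℝ, (Complex.exp (Complex.I * t * u) - 1) ∂(nuStable α m₁ m₂))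

/-!
Write the test function as `g x = ∫ h t * exp (i t x) dt` with `h` Schwartz, and let `φ` be the
characteristic function of `μ` and `Φ t = ∫ (exp (i t u) - 1) ν(du)`, so that `φ' = (i c + Φ') φ`
off the origin. Integrating by parts, `E[X g(X)] = -i ∫ h φ' = c E[g(X)] - i ∫ h Φ' φ`, and the
last integral is `E[k(X)]` for `k x = ∫ h t * Φ' t * exp (i t x) dt`.

It remains to see that `∫ u g(x + u) ν(du) = -i k x`. Since `∫ |u| ν(du) = ∞`, one cannot
differentiate `Φ` under the integral. Instead `u g(x + u)` is the commutator of multiplication by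
`x` with the increment operator `g ↦ g(· + u) - g`; integrated against `ν` the latter is the Fourier
multiplier `Φ`, and the commutator becomes the multiplier `-i Φ'`.

For a stable `ν` the scaling `Φ (s t) = s ^ α Φ t` gives `Φ' t = (α / t) Φ t = O(|t| ^ (α - 1))`,
which is locally integrable because `α > 0`.
-/

open Complex Filter Set
open scoped FourierTransform SchwartzMap Topology

section Calculus

variable {E : Type*} [NormedAddCommGroup E] [NormedSpace ℝ E] {f f' : ℝ → E}

theorem integral_eq_zero_of_hasDerivAt_off_point (a : ℝ) (hcont : Continuous f)
    (hderiv : ∀ x ≠ a, HasDerivAt f (f' x) x) (hf' : Integrable f') (hf : Integrable f) :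
    ∫ x, f' x = 0 := by
  by_cases hE : CompleteSpace E
  swap
  · simp [integral, hE]
  have hbot : Tendsto f atBot (𝓝 0) :=
    tendsto_zero_of_hasDerivAt_of_integrableOn_Iic (a := a - 1)
      (fun x hx => hderiv x (hx.trans_lt (sub_one_lt a)).ne) hf'.integrableOn hf.integrableOn
  have htop : Tendsto f atTop (𝓝 0) :=
    tendsto_zero_of_hasDerivAt_of_integrableOn_Ioi (a := a)
      (fun x hx => hderiv x (ne_of_gt hx)) hf'.integrableOn hf.integrableOn
  have hleft : ∫ x in Iic a, f' x = f a - 0 :=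
    integral_Iic_of_hasDerivAt_of_tendsto hcont.continuousWithinAt
      (fun x hx => hderiv x (ne_of_lt hx)) hf'.integrableOn hbot
  have hright : ∫ x in Ioi a, f' x = 0 - f a :=
    integral_Ioi_of_hasDerivAt_of_tendsto hcont.continuousWithinAt
      (fun x hx => hderiv x (ne_of_gt hx)) hf'.integrableOn htop
  rw [← intervalIntegral.integral_Iic_add_Ioi (b := a) hf'.integrableOn hf'.integrableOn,
    hleft, hright]
  abel

variable {α : ℝ} (hf : ∀ s > 0, ∀ t, f (s * t) = s ^ α • f t)
include hf

theorem hasDerivAt_of_homogeneous {t : ℝ} (ht : t ≠ 0) :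
    HasDerivAt f ((α / t) • f t) t := by
  have hpow : HasDerivAt (fun r : ℝ => (r / t) ^ α) (α / t) t := by
    have := ((hasDerivAt_id t).div_const t).rpow_const (p := α) (.inl (div_ne_zero ht ht))
    simpa [div_self ht, div_eq_inv_mul] using this
  have hpos : ∀ᶠ r in 𝓝 t, 0 < r / t :=
    (continuous_id.div_const t).continuousAt.eventually_const_lt (by simp [div_self ht])
  refine (hpow.smul_const (f t)).congr_of_eventuallyEq ?_
  filter_upwards [hpos] with r hr
  rw [← hf _ hr, div_mul_cancel₀ _ ht]

theorem norm_le_of_homogeneous {t : ℝ} (ht : t ≠ 0) :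
    ‖f t‖ ≤ |t| ^ α * max ‖f 1‖ ‖f (-1)‖ := by
  have habs : ∀ s : ℝ, ‖f (|t| * s)‖ = |t| ^ α * ‖f s‖ := fun s => by
    rw [hf _ (abs_pos.2 ht), norm_smul, Real.norm_of_nonneg (by positivity)]
  rcases abs_choice t with h | h
  · calc ‖f t‖ = |t| ^ α * ‖f 1‖ := by rw [← habs, mul_one, h]
      _ ≤ _ := by gcongr; exact le_max_left ..
  · calc ‖f t‖ = |t| ^ α * ‖f (-1)‖ := by rw [← habs, mul_neg_one, h, neg_neg]
      _ ≤ _ := by gcongr; exact le_max_right ..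

end Calculus

section PowerWeight

theorem integrable_comp_abs {f : ℝ → ℝ} (hf : IntegrableOn f (Ioi 0)) :
    Integrable fun x => f |x| := by
  have h := (integrable_fun_norm_addHaar (volume : Measure ℝ) (f := f)).2 (by simpa using hf)
  simpa using h

theorem integrable_rpow_abs_mul_min {s : ℝ} (hs : -2 < s) (hs' : s < -1) :
    Integrable fun u : ℝ => |u| ^ s * min 1 |u| := by
  refine integrable_comp_abs (f := fun u => u ^ s * min 1 u) ?_
  have hnear : IntegrableOn (fun u : ℝ => u ^ s * min 1 u) (Ioc 0 1) := by
    have h : IntegrableOn (fun u : ℝ => u ^ (s + 1)) (Ioc 0 1) :=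
      (intervalIntegrable_iff_integrableOn_Ioc_of_le zero_le_one).1
        (intervalIntegral.intervalIntegrable_rpow' (by linarith))
    refine h.congr_fun (fun u hu => ?_) measurableSet_Ioc
    simp only [min_eq_right hu.2, Real.rpow_add_one hu.1.ne']
  have hfar : IntegrableOn (fun u : ℝ => u ^ s * min 1 u) (Ioi 1) := by
    refine (integrableOn_Ioi_rpow_of_lt hs' zero_lt_one).congr_fun (fun u hu => ?_)
      measurableSet_Ioi
    simp only [min_eq_left (mem_Ioi.1 hu).le, mul_one]
  exact Ioc_union_Ioi_eq_Ioi (zero_le_one' ℝ) ▸ hnear.union hfar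

theorem integrable_rpow_abs_smul {E : Type*} [NormedAddCommGroup E] [NormedSpace ℝ E]
    {f : ℝ → E} {s C : ℝ} (hs : -1 < s) (hs' : s < 0) (hf : Integrable f)
    (hC : ∀ u, ‖f u‖ ≤ C) : Integrable fun u : ℝ => |u| ^ s • f u := by
  have hdom := ((integrable_rpow_abs_mul_min (s := s - 1) (by linarith) (by linarith)).const_mul
    C).add hf.norm
  have hmeas : Measurable fun u : ℝ => |u| ^ s := by fun_prop
  refine hdom.mono' (hmeas.aestronglyMeasurable.smul hf.1) ?_
  filter_upwards [Measure.ae_ne volume 0] with u hu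
  have hpos : 0 < |u| := abs_pos.2 hu
  have hC0 : 0 ≤ C := (norm_nonneg _).trans (hC 0)
  rw [norm_smul, Real.norm_of_nonneg (by positivity)]
  simp only [Pi.add_apply]
  rcases le_total |u| 1 with h | h
  · rw [min_eq_right h, ← Real.rpow_add_one hpos.ne', sub_add_cancel]
    nlinarith [hC u, norm_nonneg (f u), Real.rpow_nonneg hpos.le s]
  · have : |u| ^ s ≤ 1 := Real.rpow_le_one_of_one_le_of_nonpos h hs'.le
    have h0 : 0 ≤ C * (|u| ^ (s - 1) * min 1 |u|) := by positivity
    nlinarith [norm_nonneg (f u)]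

theorem integrable_mul_deriv_of_homogeneous {f h : ℝ → ℂ} {α C : ℝ} (hα : 0 < α) (hα' : α < 1)
    (hf : ∀ s > 0, ∀ t, f (s * t) = s ^ α • f t) (hfm : AEStronglyMeasurable f)
    (hh : Integrable h) (hC : ∀ t, ‖h t‖ ≤ C) :
    Integrable fun t : ℝ => h t * ((α / t) • f t) := by
  have hdom := (integrable_rpow_abs_smul (s := α - 1) (by linarith) (by linarith) hh hC).norm
  have hmeas : Measurable fun t : ℝ => α / t := by fun_prop
  refine (hdom.const_mul (α * max ‖f 1‖ ‖f (-1)‖)).mono'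
    (hh.1.mul (hmeas.aestronglyMeasurable.smul hfm)) ?_
  filter_upwards [Measure.ae_ne volume 0] with t ht
  have hpos : 0 < |t| := abs_pos.2 ht
  calc ‖h t * ((α / t) • f t)‖ = ‖h t‖ * (α / |t| * ‖f t‖) := by
        rw [norm_mul, norm_smul, norm_div, Real.norm_of_nonneg hα.le, Real.norm_eq_abs]
    _ ≤ ‖h t‖ * (α / |t| * (|t| ^ α * max ‖f 1‖ ‖f (-1)‖)) := by
        gcongr
        exact norm_le_of_homogeneous hf ht
    _ = α * max ‖f 1‖ ‖f (-1)‖ * ‖|t| ^ (α - 1) • h t‖ := by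
        rw [norm_smul, Real.norm_of_nonneg (by positivity), Real.rpow_sub_one hpos.ne']
        ring

end PowerWeight

section TrigIntegral

/-- The inverse Fourier transform `x ↦ ∫ h t * exp (i t x) dt` in the normalisation of `charFun`. -/
noncomputable def trigIntegral (h : ℝ → ℂ) (x : ℝ) : ℂ :=
  ∫ t : ℝ, h t * cexp (t * x * I)

theorem norm_cexp_mul_mul_I (t x : ℝ) : ‖cexp (t * x * I)‖ = 1 := by
  exact_mod_cast norm_exp_ofReal_mul_I (t * x)

theorem norm_cexp_mul_mul_I_sub_one_le (t x : ℝ) :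
    ‖cexp (t * x * I) - 1‖ ≤ 2 * (1 + |t|) * min 1 |x| := by
  have hlip : ‖cexp (t * x * I) - 1‖ ≤ |t| * |x| := by
    simpa [mul_comm, mul_left_comm] using Real.norm_exp_I_mul_ofReal_sub_one_le (x := t * x)
  have htwo : ‖cexp (t * x * I) - 1‖ ≤ 2 := by
    linarith [norm_sub_le (cexp (t * x * I)) 1, norm_cexp_mul_mul_I t x, norm_one (α := ℂ)]
  rcases le_total 1 |x| with h | h
  · rw [min_eq_left h]
    linarith [abs_nonneg t]
  · rw [min_eq_right h]
    nlinarith [abs_nonneg t, abs_nonneg x, mul_nonneg (abs_nonneg t) (abs_nonneg x)]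

theorem hasDerivAt_mul_mul_I (t x : ℝ) :
    HasDerivAt (fun t : ℝ => (t * x * I : ℂ)) (x * I) t := by
  simpa [mul_assoc] using (hasDerivAt_id t).ofReal_comp.mul_const (x * I : ℂ)

theorem hasDerivAt_cexp_mul_mul_I (t x : ℝ) :
    HasDerivAt (fun t : ℝ => cexp (t * x * I)) (x * I * cexp (t * x * I)) t := by
  simpa only [mul_comm] using (hasDerivAt_mul_mul_I t x).cexp

theorem integrable_mul_cexp {h : ℝ → ℂ} (hh : Integrable h) (x : ℝ) :
    Integrable fun t : ℝ => h t * cexp (t * x * I) :=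
  hh.mul_bdd (c := 1) (by fun_prop) (.of_forall fun t => (norm_cexp_mul_mul_I t x).le)

theorem trigIntegral_add_sub {h : ℝ → ℂ} (hh : Integrable h) (x u : ℝ) :
    trigIntegral h (x + u) - trigIntegral h x =
      ∫ t : ℝ, h t * (cexp (t * u * I) - 1) * cexp (t * x * I) := by
  rw [trigIntegral, trigIntegral, ← integral_sub (integrable_mul_cexp hh _)
    (integrable_mul_cexp hh _)]
  refine integral_congr_ae (.of_forall fun t => ?_)
  simp only [ofReal_add, mul_add, add_mul, Complex.exp_add]
  ring

theorem exists_schwartzMap_trigIntegral_eq (g : 𝓢(ℝ, ℂ)) :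
    ∃ h : 𝓢(ℝ, ℂ), trigIntegral h = g := by
  let e : ℝ ≃L[ℝ] ℝ :=
    ContinuousLinearEquiv.unitsEquivAut ℝ (Units.mk0 (2 * Real.pi) (by positivity))
  let gscaled : 𝓢(ℝ, ℂ) := SchwartzMap.compCLMOfContinuousLinearEquiv ℂ e g
  let h : 𝓢(ℝ, ℂ) := 𝓕 gscaled
  refine ⟨h, funext fun x => ?_⟩
  calc trigIntegral h x
      = (𝓕⁻ h) (x / (2 * Real.pi)) := by
        rw [SchwartzMap.fourierInv_coe, Real.fourierInv_eq']
        refine integral_congr_ae (.of_forall fun t => ?_)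
        have : (Real.pi : ℂ) ≠ 0 := by exact_mod_cast Real.pi_ne_zero
        simp only [smul_eq_mul, mul_comm (cexp _)]
        congr 2
        simp
        field_simp
    _ = g (e (x / (2 * Real.pi))) := by
        rw [FourierTransform.fourierInv_fourier_eq]
        rfl
    _ = g x := by simp [e]

section Fubini

variable (μ : Measure ℝ) [IsFiniteMeasure μ] {k : ℝ → ℂ}

theorem integrable_prod_mul_cexp (hk : Integrable k) :
    Integrable (fun p : ℝ × ℝ => k p.2 * cexp (p.2 * p.1 * I)) (μ.prod volume) :=
  (hk.comp_snd μ).mul_bdd (c := 1) (by fun_prop)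
    (.of_forall fun p => (norm_cexp_mul_mul_I p.2 p.1).le)

theorem integrable_trigIntegral (hk : Integrable k) : Integrable (trigIntegral k) μ :=
  (integrable_prod_mul_cexp μ hk).integral_prod_left

theorem integral_trigIntegral (hk : Integrable k) :
    ∫ x, trigIntegral k x ∂μ = ∫ t, k t * charFun μ t := by
  simp only [trigIntegral, charFun_apply_real, ← integral_const_mul]
  exact integral_integral_swap (integrable_prod_mul_cexp μ hk)

end Fubini

section Schwartz

variable (h : 𝓢(ℝ, ℂ)) {F F' : ℝ → ℂ} {C : ℝ}

theorem integrable_schwartzMap_mul (hF : AEStronglyMeasurable F)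
    (hC : ∀ t, ‖F t‖ ≤ C * (1 + |t|)) : Integrable fun t => h t * F t := by
  have hdom : Integrable fun t : ℝ => C * (‖h t‖ + |t| * ‖h t‖) := by
    simpa using (h.integrable.norm.add (h.integrable_pow_mul volume 1)).const_mul C
  refine hdom.mono' (h.continuous.aestronglyMeasurable.mul hF) (.of_forall fun t => ?_)
  calc ‖h t * F t‖ ≤ ‖h t‖ * (C * (1 + |t|)) := by
        rw [norm_mul]
        gcongr
        exact hC t
    _ = C * (‖h t‖ + |t| * ‖h t‖) := by ring

/-- The momentum operator `I * d/dt`, which `trigIntegral` turns into multiplication by `x`. -/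
noncomputable def momentum : 𝓢(ℝ, ℂ) := I • SchwartzMap.derivCLM ℂ ℂ h

theorem integral_momentum_mul (hF : Continuous F) (hC : ∀ t, ‖F t‖ ≤ C * (1 + |t|))
    (hF' : ∀ t ≠ 0, HasDerivAt F (F' t) t) (hint : Integrable fun t => h t * F' t) :
    ∫ t, momentum h t * F t = -I * ∫ t, h t * F' t := by
  have hder := integrable_schwartzMap_mul (SchwartzMap.derivCLM ℂ ℂ h)
    hF.aestronglyMeasurable hC
  have hibp : (∫ t, SchwartzMap.derivCLM ℂ ℂ h t * F t) + ∫ t, h t * F' t = 0 := by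
    rw [← integral_add hder hint]
    exact integral_eq_zero_of_hasDerivAt_off_point 0 (h.continuous.mul hF)
      (fun t ht => h.differentiableAt.hasDerivAt.mul (hF' t ht)) (hder.add hint)
      (integrable_schwartzMap_mul h hF.aestronglyMeasurable hC)
  simp only [momentum, smul_apply, smul_eq_mul, mul_assoc, integral_const_mul]
  linear_combination I * hibp

theorem trigIntegral_momentum (x : ℝ) :
    trigIntegral (momentum h) x = x * trigIntegral h x := by
  have hassoc (t : ℝ) : h t * (x * I * cexp (t * x * I)) = x * I * (h t * cexp (t * x * I)) := by
    ring
  have hint : Integrable fun t : ℝ => h t * (x * I * cexp (t * x * I)) := by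
    simpa only [hassoc] using (integrable_mul_cexp h.integrable x).const_mul (x * I)
  rw [trigIntegral, integral_momentum_mul h (C := 1) (by fun_prop)
    (fun t => by simp [norm_cexp_mul_mul_I]) (fun t _ => hasDerivAt_cexp_mul_mul_I t x) hint]
  simp only [hassoc, integral_const_mul, trigIntegral]
  linear_combination -x * (∫ t, h t * cexp (t * x * I)) * I_mul_I

end Schwartz

end TrigIntegral

section LevyExponent

/-- The characteristic exponent `t ↦ ∫ (exp (i t u) - 1) ν(du)` of a pure jump Lévy process of
bounded variation with Lévy measure `ν`, that is, `min 1 |u|` is `ν`-integrable. -/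
noncomputable def levyExponent (ν : Measure ℝ) (t : ℝ) : ℂ :=
  ∫ u : ℝ, (cexp (t * u * I) - 1) ∂ν

variable {ν : Measure ℝ} (hν : Integrable (fun u : ℝ => min 1 |u|) ν)
include hν

theorem integrable_cexp_sub_one (t : ℝ) :
    Integrable (fun u : ℝ => cexp (t * u * I) - 1) ν :=
  (hν.const_mul (2 * (1 + |t|))).mono' (by fun_prop)
    (.of_forall (norm_cexp_mul_mul_I_sub_one_le t))

theorem norm_levyExponent_le (t : ℝ) :
    ‖levyExponent ν t‖ ≤ (2 * ∫ u, min 1 |u| ∂ν) * (1 + |t|) := by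
  have h := norm_integral_le_of_norm_le (hν.const_mul (2 * (1 + |t|)))
    (.of_forall (norm_cexp_mul_mul_I_sub_one_le t))
  rw [integral_const_mul] at h
  exact h.trans_eq (by ring)

theorem continuous_levyExponent : Continuous (levyExponent ν) := by
  refine continuous_iff_continuousAt.2 fun t₀ => ?_
  refine continuousAt_of_dominated (.of_forall fun t => (integrable_cexp_sub_one hν t).1)
    (bound := fun u => 2 * (1 + (|t₀| + 1)) * min 1 |u|) ?_ (hν.const_mul _)
    (.of_forall fun u => by fun_prop)
  have hnear : ∀ᶠ t : ℝ in 𝓝 t₀, |t| < |t₀| + 1 :=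
    continuous_abs.continuousAt.eventually_lt_const (lt_add_one _)
  filter_upwards [hnear] with t ht
  refine .of_forall fun u => (norm_cexp_mul_mul_I_sub_one_le t u).trans ?_
  gcongr

variable (h : 𝓢(ℝ, ℂ)) (x : ℝ)

theorem integrable_prod_mul_cexp_sub_one :
    Integrable (fun p : ℝ × ℝ => h p.2 * (cexp (p.2 * p.1 * I) - 1) * cexp (p.2 * x * I))
      (ν.prod volume) := by
  have hweight : Integrable fun t : ℝ => h t * ((2 * (1 + |t|) : ℝ) : ℂ) :=
    integrable_schwartzMap_mul h (C := 2) (by fun_prop) fun t => by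
      rw [norm_real, Real.norm_of_nonneg (by positivity)]
  refine (hν.mul_prod hweight.norm).mono' ?_ (.of_forall fun p => ?_)
  · have := h.continuous
    fun_prop
  · have hle := norm_cexp_mul_mul_I_sub_one_le p.2 p.1
    have h0 : 0 ≤ 2 * (1 + |p.2|) := by positivity
    rw [norm_mul, norm_mul, norm_mul, norm_cexp_mul_mul_I, norm_real, Real.norm_of_nonneg h0]
    nlinarith [norm_nonneg (h p.2)]

theorem integrable_trigIntegral_add_sub :
    Integrable (fun u => trigIntegral h (x + u) - trigIntegral h x) ν := by
  simpa only [trigIntegral_add_sub h.integrable] using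
    (integrable_prod_mul_cexp_sub_one hν h x).integral_prod_left

theorem integral_trigIntegral_add_sub [SFinite ν] :
    ∫ u, (trigIntegral h (x + u) - trigIntegral h x) ∂ν =
      trigIntegral (fun t => h t * levyExponent ν t) x := by
  simp only [trigIntegral_add_sub h.integrable]
  rw [integral_integral_swap (integrable_prod_mul_cexp_sub_one hν h x)]
  simp only [trigIntegral, levyExponent, integral_mul_const, integral_const_mul]

end LevyExponent

section Stein

variable {μ ν : Measure ℝ} (h : 𝓢(ℝ, ℂ)) {L : ℝ → ℂ} {c : ℝ}

theorem integral_mul_trigIntegral [IsFiniteMeasure μ] {φ' : ℝ → ℂ}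
    (hφ' : ∀ t ≠ 0, HasDerivAt (charFun μ) (φ' t) t) (hint : Integrable fun t => h t * φ' t) :
    ∫ x : ℝ, x * trigIntegral h x ∂μ = -I * ∫ t, h t * φ' t := by
  have hC (t : ℝ) : ‖charFun μ t‖ ≤ μ.real univ * (1 + |t|) :=
    (norm_charFun_le t).trans (le_mul_of_one_le_right measureReal_nonneg (by simp))
  simp only [← trigIntegral_momentum]
  rw [integral_trigIntegral μ (momentum h).integrable,
    integral_momentum_mul h continuous_charFun hC hφ' hint]

theorem integral_mul_trigIntegral_of_logDeriv [IsProbabilityMeasure μ]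
    (hL : ∀ t ≠ 0, HasDerivAt (charFun μ) (charFun μ t * (c * I + L t)) t)
    (hhL : Integrable fun t => h t * L t) :
    ∫ x : ℝ, x * trigIntegral h x ∂μ =
      c * ∫ x, trigIntegral h x ∂μ - I * ∫ x, trigIntegral (fun t => h t * L t) x ∂μ := by
  have hmul {k : ℝ → ℂ} (hk : Integrable k) : Integrable fun t => k t * charFun μ t :=
    hk.mul_bdd (c := 1) continuous_charFun.aestronglyMeasurable (.of_forall norm_charFun_le_one)
  have hφ := (hmul h.integrable).const_mul (c * I)
  have hexpand (t : ℝ) : h t * (charFun μ t * (c * I + L t)) =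
      c * I * (h t * charFun μ t) + h t * L t * charFun μ t := by ring
  rw [integral_mul_trigIntegral h hL (by simpa only [hexpand] using hφ.fun_add (hmul hhL))]
  simp only [hexpand]
  rw [integral_add hφ (hmul hhL), integral_const_mul, integral_trigIntegral μ h.integrable,
    integral_trigIntegral μ hhL]
  linear_combination -c * (∫ t, h t * charFun μ t) * I_mul_I

/- Both increments on the right are `ν`-integrable, although `u` itself need not be. -/
theorem mul_trigIntegral_add (x u : ℝ) :
    u * trigIntegral h (x + u) =
      (trigIntegral (momentum h) (x + u) - trigIntegral (momentum h) x) -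
        x * (trigIntegral h (x + u) - trigIntegral h x) := by
  simp only [trigIntegral_momentum, ofReal_add]
  ring

variable (hL : ∀ t ≠ 0, HasDerivAt (levyExponent ν) (L t) t)
  (hν : Integrable (fun u : ℝ => min 1 |u|) ν)
include hν hL

theorem trigIntegral_momentum_mul_levyExponent (hhL : Integrable fun t => h t * L t) (x : ℝ) :
    trigIntegral (fun t => momentum h t * levyExponent ν t) x =
      x * trigIntegral (fun t => h t * levyExponent ν t) x -
        I * trigIntegral (fun t => h t * L t) x := by
  have hcont := continuous_levyExponent hν
  have hbound := norm_levyExponent_le hν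
  have hintΦ := (integrable_mul_cexp
    (integrable_schwartzMap_mul h hcont.aestronglyMeasurable hbound) x).const_mul (x * I)
  have hintL := integrable_mul_cexp hhL x
  have hexpand (t : ℝ) :
      h t * (L t * cexp (t * x * I) + levyExponent ν t * (x * I * cexp (t * x * I))) =
        x * I * (h t * levyExponent ν t * cexp (t * x * I)) + h t * L t * cexp (t * x * I) := by
    ring
  have hibp := integral_momentum_mul h (F := fun t => levyExponent ν t * cexp (t * x * I))
    (by fun_prop) (fun t => by simpa [norm_cexp_mul_mul_I] using hbound t)
    (fun t ht => (hL t ht).mul (hasDerivAt_cexp_mul_mul_I t x))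
    (by simpa only [hexpand] using hintΦ.fun_add hintL)
  simp only [hexpand] at hibp
  rw [integral_add hintΦ hintL, integral_const_mul] at hibp
  simp only [trigIntegral, mul_assoc (momentum h _), hibp]
  linear_combination -x * (∫ t, h t * levyExponent ν t * cexp (t * x * I)) * I_mul_I

variable [SFinite ν]

theorem integral_mul_trigIntegral_add (hhL : Integrable fun t => h t * L t) (x : ℝ) :
    ∫ u : ℝ, u * trigIntegral h (x + u) ∂ν = -I * trigIntegral (fun t => h t * L t) x := by
  simp only [mul_trigIntegral_add h x]
  rw [integral_sub (integrable_trigIntegral_add_sub hν (momentum h) x)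
    ((integrable_trigIntegral_add_sub hν h x).const_mul _), integral_const_mul,
    integral_trigIntegral_add_sub hν h, integral_trigIntegral_add_sub hν (momentum h),
    trigIntegral_momentum_mul_levyExponent h hL hν hhL]
  ring

theorem stein_identity_complex [IsProbabilityMeasure μ]
    (hμ : ∀ t : ℝ, charFun μ t = cexp (t * c * I + levyExponent ν t))
    (hhL : ∀ h : 𝓢(ℝ, ℂ), Integrable fun t => h t * L t) (g : 𝓢(ℝ, ℂ)) :
    Integrable (fun x : ℝ => (x - c) * g x - ∫ u : ℝ, u * g (x + u) ∂ν) μ ∧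
      ∫ x : ℝ, ((x - c) * g x - ∫ u : ℝ, u * g (x + u) ∂ν) ∂μ = 0 := by
  obtain ⟨h, hg⟩ := exists_schwartzMap_trigIntegral_eq g
  have hderiv (t : ℝ) (ht : t ≠ 0) : HasDerivAt (charFun μ) (charFun μ t * (c * I + L t)) t := by
    rw [funext hμ]
    exact ((hasDerivAt_mul_mul_I t c).add (hL t ht)).cexp
  have hgint := (integrable_trigIntegral μ h.integrable).const_mul (c : ℂ)
  have hxint : Integrable (fun x : ℝ => x * trigIntegral h x) μ := by
    simpa only [funext (trigIntegral_momentum h)] using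
      integrable_trigIntegral μ (momentum h).integrable
  have hLint := (integrable_trigIntegral μ (hhL h)).const_mul (-I)
  have hdrift : Integrable (fun x : ℝ => (x - c) * trigIntegral h x) μ := by
    simp only [sub_mul]
    exact hxint.sub hgint
  simp only [← hg, integral_mul_trigIntegral_add h hL hν (hhL h)]
  refine ⟨hdrift.sub hLint, ?_⟩
  rw [integral_sub hdrift hLint]
  simp only [sub_mul]
  rw [integral_sub hxint hgint, integral_mul_trigIntegral_of_logDeriv h hderiv (hhL h),
    integral_const_mul, integral_const_mul]
  ring

theorem stein_identity [IsProbabilityMeasure μ]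
    (hμ : ∀ t : ℝ, charFun μ t = cexp (t * c * I + levyExponent ν t))
    (hhL : ∀ h : 𝓢(ℝ, ℂ), Integrable fun t => h t * L t) (g : 𝓢(ℝ, ℝ)) :
    Integrable (fun x => (x - c) * g x - ∫ u, u * g (x + u) ∂ν) μ ∧
      ∫ x, ((x - c) * g x - ∫ u, u * g (x + u) ∂ν) ∂μ = 0 := by
  have hcast (x : ℝ) : ((x - c) * (g x : ℂ) - ∫ u : ℝ, u * (g (x + u) : ℂ) ∂ν) =
      (((x - c) * g x - ∫ u, u * g (x + u) ∂ν : ℝ) : ℂ) := by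
    simp only [ofReal_sub, ofReal_mul, ← integral_complex_ofReal]
  obtain ⟨hint, hzero⟩ :=
    stein_identity_complex hL hν hμ hhL (g.postcompCLM Complex.ofRealCLM)
  simp only [SchwartzMap.postcompCLM_apply, ofRealCLM_apply, hcast] at hint hzero
  rw [integral_complex_ofReal, ofReal_eq_zero] at hzero
  exact ⟨hint.re, hzero⟩

end Stein

section Stable

/-- The value `m₁` on the right and `m₂` on the left half-line, by which the symmetric density
`|u| ^ (-α - 1)` is multiplied to give the density of `nuStable α m₁ m₂`. -/
noncomputable def sideWeight (m₁ m₂ u : ℝ) : ℝ :=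
  if 0 < u then m₁ else if u < 0 then m₂ else 0

variable {α m₁ m₂ : ℝ}

@[fun_prop]
theorem measurable_sideWeight : Measurable (sideWeight m₁ m₂) :=
  .ite measurableSet_Ioi measurable_const (.ite measurableSet_Iio measurable_const measurable_const)

theorem sideWeight_mul_of_pos {s : ℝ} (hs : 0 < s) (u : ℝ) :
    sideWeight m₁ m₂ (s * u) = sideWeight m₁ m₂ u := by
  simp only [sideWeight, ← smul_eq_mul s u, smul_pos_iff_of_pos_left hs,
    smul_neg_iff_of_pos_left hs]

theorem nuStable_eq_withDensity : nuStable α m₁ m₂ =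
    volume.withDensity fun u => ENNReal.ofReal (sideWeight m₁ m₂ u * |u| ^ (-α - 1)) := by
  rw [nuStable]
  congr with u
  simp only [sideWeight]
  split_ifs with h
  · rw [abs_of_pos h]
  · rfl
  · rw [zero_mul]

instance sFinite_nuStable : SFinite (nuStable α m₁ m₂) := by
  rw [nuStable]
  infer_instance

variable (hm₁ : 0 ≤ m₁) (hm₂ : 0 ≤ m₂)
include hm₁ hm₂

theorem sideWeight_nonneg (u : ℝ) : 0 ≤ sideWeight m₁ m₂ u := by
  unfold sideWeight
  split_ifs <;> positivity

theorem sideWeight_mul_rpow_nonneg (α u : ℝ) : 0 ≤ sideWeight m₁ m₂ u * |u| ^ (-α - 1) :=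
  mul_nonneg (sideWeight_nonneg hm₁ hm₂ u) (by positivity)

theorem sideWeight_le (u : ℝ) : sideWeight m₁ m₂ u ≤ m₁ + m₂ := by
  unfold sideWeight
  split_ifs <;> linarith

section Integrals

variable {E : Type*} [NormedAddCommGroup E] [NormedSpace ℝ E] {f : ℝ → E}

theorem integrable_sideWeight_smul (hf : Integrable f) :
    Integrable fun u => sideWeight m₁ m₂ u • f u :=
  hf.bdd_smul (m₁ + m₂) measurable_sideWeight.aestronglyMeasurable
    (.of_forall fun u => by
      rw [Real.norm_of_nonneg (sideWeight_nonneg hm₁ hm₂ u)]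
      exact sideWeight_le hm₁ hm₂ u)

theorem integrable_nuStable (hf : Integrable fun u => |u| ^ (-α - 1) • f u) :
    Integrable f (nuStable α m₁ m₂) := by
  rw [nuStable_eq_withDensity, integrable_withDensity_iff_integrable_smul' (by fun_prop)
    (.of_forall fun u => ENNReal.ofReal_lt_top)]
  simpa only [ENNReal.toReal_ofReal (sideWeight_mul_rpow_nonneg hm₁ hm₂ α _), mul_smul] using
    integrable_sideWeight_smul hm₁ hm₂ hf

theorem integral_nuStable (f : ℝ → E) : ∫ u, f u ∂nuStable α m₁ m₂ =
    ∫ u, sideWeight m₁ m₂ u • |u| ^ (-α - 1) • f u := by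
  rw [nuStable_eq_withDensity, integral_withDensity_eq_integral_toReal_smul (by fun_prop)
    (.of_forall fun u => ENNReal.ofReal_lt_top)]
  simp only [ENNReal.toReal_ofReal (sideWeight_mul_rpow_nonneg hm₁ hm₂ α _), mul_smul]

theorem integral_nuStable_comp_mul {s : ℝ} (hs : 0 < s) (f : ℝ → E) :
    ∫ u, f (s * u) ∂nuStable α m₁ m₂ = s ^ α • ∫ u, f u ∂nuStable α m₁ m₂ := by
  have hpow (u : ℝ) : |u| ^ (-α - 1) = s ^ (α + 1) * |s * u| ^ (-α - 1) := by
    rw [abs_mul, abs_of_pos hs, Real.mul_rpow hs.le (abs_nonneg u), ← mul_assoc,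
      ← Real.rpow_add hs]
    simp
  have hdensity (u : ℝ) : sideWeight m₁ m₂ u • |u| ^ (-α - 1) • f (s * u) =
      s ^ (α + 1) • sideWeight m₁ m₂ (s * u) • |s * u| ^ (-α - 1) • f (s * u) := by
    rw [sideWeight_mul_of_pos hs, hpow]
    module
  rw [integral_nuStable hm₁ hm₂, integral_nuStable hm₁ hm₂]
  simp only [hdensity]
  rw [integral_smul, Measure.integral_comp_mul_left
    (fun u => sideWeight m₁ m₂ u • |u| ^ (-α - 1) • f u), smul_smul, abs_of_pos (by positivity),
    Real.rpow_add_one hs.ne', mul_assoc, mul_inv_cancel₀ hs.ne', mul_one]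

theorem integral_nuStable_eq_add (hf : Integrable fun u => |u| ^ (-α - 1) • f u) :
    ∫ u, f u ∂nuStable α m₁ m₂ =
      m₁ • (∫ u in Ioi 0, u ^ (-α - 1) • f u) + m₂ • ∫ u in Ioi 0, u ^ (-α - 1) • f (-u) := by
  have hint := integrable_sideWeight_smul hm₁ hm₂ hf
  rw [integral_nuStable hm₁ hm₂, ← intervalIntegral.integral_Iic_add_Ioi (b := 0)
    hint.integrableOn hint.integrableOn, add_comm, ← neg_zero, ← integral_comp_neg_Ioi, neg_zero,
    ← integral_smul, ← integral_smul]
  congr 1 <;> refine setIntegral_congr_fun measurableSet_Ioi fun u (hu : 0 < u) => ?_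
  · simp [sideWeight, hu, abs_of_pos hu]
  · simp [sideWeight, hu, hu.le, abs_of_pos hu]

end Integrals

theorem levyExponent_nuStable_mul {s : ℝ} (hs : 0 < s) (t : ℝ) :
    levyExponent (nuStable α m₁ m₂) (s * t) =
      s ^ α • levyExponent (nuStable α m₁ m₂) t := by
  rw [levyExponent, levyExponent,
    ← integral_nuStable_comp_mul hm₁ hm₂ hs fun u : ℝ => cexp (t * u * I) - 1]
  refine integral_congr_ae (.of_forall fun u => ?_)
  push_cast
  ring_nf

theorem integrable_min_one_abs_nuStable (hα : 0 < α) (hα' : α < 1) :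
    Integrable (fun u : ℝ => min 1 |u|) (nuStable α m₁ m₂) :=
  integrable_nuStable hm₁ hm₂ (integrable_rpow_abs_mul_min (by linarith) (by linarith))

omit hm₁ hm₂ in
theorem integrableOn_mul_rpow {f : ℝ → ℝ} {C : ℝ} (hα : 0 < α) (hα' : α < 1)
    (hf : Integrable f) (hC : ∀ u, ‖f u‖ ≤ C) :
    IntegrableOn (fun u => f u * u ^ (-α)) (Ioi 0) := by
  refine (integrable_rpow_abs_smul (s := -α) (by linarith) (by linarith) hf
    hC).integrableOn.congr_fun (fun u (hu : 0 < u) => ?_) measurableSet_Ioi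
  simp only [abs_of_pos hu, smul_eq_mul, mul_comm]

theorem integral_mul_nuStable {f : ℝ → ℝ} {C : ℝ} (hα : 0 < α) (hα' : α < 1)
    (hf : Integrable f) (hC : ∀ u, ‖f u‖ ≤ C) :
    ∫ u, u * f u ∂nuStable α m₁ m₂ =
      m₁ * (∫ u in Ioi 0, f u * u ^ (-α)) - m₂ * ∫ u in Ioi 0, f (-u) * u ^ (-α) := by
  have hint : Integrable fun u : ℝ => |u| ^ (-α - 1) • (u * f u) := by
    have hmeas : Measurable fun u : ℝ => |u| ^ (-α - 1) := by fun_prop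
    refine (integrable_rpow_abs_smul (s := -α) (by linarith) (by linarith) hf hC).congr'
      (hmeas.aestronglyMeasurable.smul (measurable_id.aestronglyMeasurable.mul hf.1)) ?_
    filter_upwards [Measure.ae_ne volume 0] with u hu
    have hpos : 0 < |u| := abs_pos.2 hu
    simp only [Real.rpow_sub_one hpos.ne', norm_smul, norm_mul, norm_div, Real.norm_eq_abs,
      abs_abs]
    field_simp
  rw [integral_nuStable_eq_add hm₁ hm₂ hint, sub_eq_add_neg (m₁ * _), ← mul_neg,
    ← integral_neg]
  congr 2 <;> refine setIntegral_congr_fun measurableSet_Ioi fun u (hu : 0 < u) => ?_ <;>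
    simp only [smul_eq_mul, Real.rpow_sub_one hu.ne'] <;> field_simp

theorem stein_identity_nuStable (hα : 0 < α) (hα' : α < 1) {μ : Measure ℝ}
    [IsProbabilityMeasure μ] {c : ℝ}
    (hμ : ∀ t : ℝ, charFun μ t = cexp (t * c * I + levyExponent (nuStable α m₁ m₂) t))
    (g : 𝓢(ℝ, ℝ)) :
    Integrable (fun x => (x - c) * g x - ∫ u, u * g (x + u) ∂nuStable α m₁ m₂) μ ∧
      ∫ x, ((x - c) * g x - ∫ u, u * g (x + u) ∂nuStable α m₁ m₂) ∂μ = 0 := by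
  have hν := integrable_min_one_abs_nuStable hm₁ hm₂ hα hα'
  have hscale (s : ℝ) (hs : s > 0) := levyExponent_nuStable_mul (α := α) hm₁ hm₂ hs
  refine stein_identity (fun t => hasDerivAt_of_homogeneous hscale) hν hμ (fun h => ?_) g
  exact integrable_mul_deriv_of_homogeneous hα hα' hscale
    (continuous_levyExponent hν).aestronglyMeasurable h.integrable
    h.toBoundedContinuousFunction.norm_coe_le_norm

end Stable

theorem psi01_eq_cexp_levyExponent (α m₁ m₂ β t : ℝ) : psi01 α m₁ m₂ β t =
    cexp (t * Gamma01 α m₁ m₂ β * I + levyExponent (nuStable α m₁ m₂) t) := by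
  simp only [psi01, levyExponent, mul_right_comm _ _ I, mul_comm _ I]

theorem stmt_7 (α m₁ m₂ β : ℝ) (hα : 0 < α) (hα1 : α < 1)
    (hm₁ : 0 ≤ m₁) (hm₂ : 0 ≤ m₂) (hm : 0 < m₁ + m₂)
    (μ : Measure ℝ) [IsProbabilityMeasure μ]
    (hcf : ∀ t : ℝ, ∫ x : ℝ, Complex.exp (Complex.I * t * x) ∂μ = psi01 α m₁ m₂ β t)
    (g : SchwartzMap ℝ ℝ) :
    (∀ x : ℝ, IntegrableOn (fun u : ℝ => g (x + u) * u ^ (-α)) (Set.Ioi 0)) ∧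
    (∀ x : ℝ, IntegrableOn (fun u : ℝ => g (x - u) * u ^ (-α)) (Set.Ioi 0)) ∧
    Integrable (fun x : ℝ => (x - Gamma01 α m₁ m₂ β) * g x -
      m₁ * (∫ u in Set.Ioi (0 : ℝ), g (x + u) * u ^ (-α)) +
      m₂ * ∫ u in Set.Ioi (0 : ℝ), g (x - u) * u ^ (-α)) μ ∧
    ∫ x : ℝ, ((x - Gamma01 α m₁ m₂ β) * g x -
      m₁ * (∫ u in Set.Ioi (0 : ℝ), g (x + u) * u ^ (-α)) +
      m₂ * ∫ u in Set.Ioi (0 : ℝ), g (x - u) * u ^ (-α)) ∂μ = 0 := by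
  have hbdd := g.toBoundedContinuousFunction.norm_coe_le_norm
  have hμ (t : ℝ) : charFun μ t =
      cexp (t * Gamma01 α m₁ m₂ β * I + levyExponent (nuStable α m₁ m₂) t) := by
    rw [← psi01_eq_cexp_levyExponent, ← hcf, charFun_apply_real]
    simp only [mul_comm _ I, mul_assoc]
  have hjump (x : ℝ) := integral_mul_nuStable hm₁ hm₂ hα hα1 (g.integrable.comp_add_left x)
    fun u => hbdd (x + u)
  obtain ⟨hint, hzero⟩ := stein_identity_nuStable hm₁ hm₂ hα hα1 hμ g
  simp only [hjump, ← sub_eq_add_neg, ← sub_add] at hint hzero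
  exact ⟨fun x => integrableOn_mul_rpow hα hα1 (g.integrable.comp_add_left x) fun u => hbdd _,
    fun x => integrableOn_mul_rpow hα hα1 (g.integrable.comp_sub_left x) fun u => hbdd _,
    hint, hzero⟩
end

section
/- (Stein identity for symmetric stable laws.) Let α ∈ (0,2), m > 0, and let μ be a Borel probability measure on ℝ whose characteristic function satisfies ∫_ℝ e^{itx} dμ(x) = exp(2m ∫₀^∞ (cos(tu) - 1) u^{-1-α} du) for all t ∈ ℝ. Then for every real-valued Schwartz function g on ℝ, ∫_ℝ x g(x) dμ(x) = m ∫_ℝ ∫₀^∞ (g(x+u) - g(x-u)) u^{-α} du dμ(x), all integrals being absolutely convergent. -/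
open MeasureTheory

/-!
Write `G = 𝓕⁻ f`. The formula for the characteristic function gives
`∫ G (s * x) ∂μ = ∫ exp (s ^ α * ψ v) • f v` with `ψ v` the characteristic exponent at `2 * π * v`.
Differentiating at `s = 1` yields `∫ x • G' x ∂μ` on the left and, on the right, `α * m` times the
`μ`-integral of a fractional Laplacian of `G`, since `ψ` is its Fourier multiplier. Integrating by
parts in the singular integral turns `α` times this Laplacian into the symmetric differences of
`g = G'`. A general `g` need not have a Schwartz antiderivative, but `g x - g (-x)` does, and the
symmetry of `μ` reduces the identity to that odd function.
-/

open Set Filter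
open scoped FourierTransform SchwartzMap ContDiff Topology NNReal Real

section Antiderivative

variable {E : Type*} [NormedAddCommGroup E] [NormedSpace ℝ E]

lemma hasDerivAt_setIntegral_Iic [CompleteSpace E] {f : ℝ → E} (hf : Continuous f)
    (hfi : Integrable f) (x : ℝ) : HasDerivAt (fun x ↦ ∫ y in Iic x, f y) (f x) x := by
  have hsplit : (fun x ↦ ∫ y in Iic x, f y) =
      fun x ↦ (∫ y in Iic 0, f y) + ∫ y in (0 : ℝ)..x, f y := by
    ext x
    rw [← intervalIntegral.integral_Iic_sub_Iic hfi.integrableOn hfi.integrableOn,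
      add_sub_cancel]
  rw [hsplit]
  exact (hf.integral_hasStrictDerivAt 0 x).hasDerivAt.const_add _

lemma norm_pow_mul_norm_setIntegral_le {V : Type*} [NormedAddCommGroup V] [MeasurableSpace V]
    {ν : Measure V} {f : V → E} (hf : Integrable f ν) {k : ℕ}
    (hfk : Integrable (fun y ↦ ‖y‖ ^ k * ‖f y‖) ν) {s : Set V} (hs : MeasurableSet s) {x : V}
    (hxs : ∀ y ∈ s, ‖x‖ ≤ ‖y‖) :
    ‖x‖ ^ k * ‖∫ y in s, f y ∂ν‖ ≤ ∫ y, ‖y‖ ^ k * ‖f y‖ ∂ν :=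
  calc ‖x‖ ^ k * ‖∫ y in s, f y ∂ν‖
    _ ≤ ‖x‖ ^ k * ∫ y in s, ‖f y‖ ∂ν := by gcongr; exact norm_integral_le_integral_norm _
    _ = ∫ y in s, ‖x‖ ^ k * ‖f y‖ ∂ν := (integral_const_mul _ _).symm
    _ ≤ ∫ y in s, ‖y‖ ^ k * ‖f y‖ ∂ν :=
      setIntegral_mono_on (hf.norm.const_mul _).integrableOn hfk.integrableOn hs
        fun y hy ↦ by gcongr; exact hxs y hy
    _ ≤ ∫ y, ‖y‖ ^ k * ‖f y‖ ∂ν :=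
      setIntegral_le_integral hfk (.of_forall fun y ↦ by positivity)

lemma norm_pow_mul_norm_setIntegral_Iic_le {f : ℝ → E} (hf : Integrable f) {k : ℕ}
    (hfk : Integrable fun y ↦ ‖y‖ ^ k * ‖f y‖) (hf0 : ∫ y, f y = 0) (x : ℝ) :
    ‖x‖ ^ k * ‖∫ y in Iic x, f y‖ ≤ ∫ y, ‖y‖ ^ k * ‖f y‖ := by
  rcases le_total x 0 with hx | hx
  · refine norm_pow_mul_norm_setIntegral_le hf hfk measurableSet_Iic fun y hy ↦ ?_
    exact abs_le_abs_of_nonpos hx hy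
  · -- Vanishing total mass turns the left tail into the right one.
    have htail : ∫ y in Iic x, f y = -∫ y in Ioi x, f y := by
      rw [eq_neg_iff_add_eq_zero, ← hf0]
      exact intervalIntegral.integral_Iic_add_Ioi hf.integrableOn hf.integrableOn
    rw [htail, norm_neg]
    refine norm_pow_mul_norm_setIntegral_le hf hfk measurableSet_Ioi fun y hy ↦ ?_
    exact abs_le_abs_of_nonneg hx (le_of_lt hy)

theorem exists_schwartzMap_hasDerivAt [CompleteSpace E] (g : 𝓢(ℝ, E)) (hg : ∫ x, g x = 0) :
    ∃ G : 𝓢(ℝ, E), ∀ x, HasDerivAt G (g x) x := by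
  set G : ℝ → E := fun x ↦ ∫ y in Iic x, g y
  have hG : ∀ x, HasDerivAt G (g x) x := hasDerivAt_setIntegral_Iic g.continuous g.integrable
  have hderiv : deriv G = g := funext fun x ↦ (hG x).deriv
  have hsmooth : ContDiff ℝ ∞ G :=
    contDiff_infty_iff_deriv.2 ⟨fun x ↦ (hG x).differentiableAt, hderiv ▸ g.smooth'⟩
  refine ⟨⟨G, hsmooth, fun k n ↦ ?_⟩, hG⟩
  cases n with
  | zero =>
    refine ⟨∫ y, ‖y‖ ^ k * ‖g y‖, fun x ↦ ?_⟩
    rw [norm_iteratedFDeriv_zero]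
    exact norm_pow_mul_norm_setIntegral_Iic_le g.integrable (g.integrable_pow_mul volume k) hg x
  | succ n =>
    obtain ⟨C, hC⟩ := g.decay' k n
    refine ⟨C, fun x ↦ ?_⟩
    rw [norm_iteratedFDeriv_eq_norm_iteratedDeriv, iteratedDeriv_succ', hderiv,
      ← norm_iteratedFDeriv_eq_norm_iteratedDeriv]
    exact hC x

end Antiderivative

section Schwartz

variable {D E : Type*} [NormedAddCommGroup D] [NormedSpace ℝ D] [NormedAddCommGroup E]
  [NormedSpace ℝ E]

lemma exists_lipschitzWith_schwartzMap (g : 𝓢(D, E)) : ∃ K, LipschitzWith K g := by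
  obtain ⟨C, hC0, hC⟩ := g.decay 0 1
  lift C to ℝ≥0 using hC0.le
  refine ⟨C, lipschitzWith_of_nnnorm_fderiv_le g.differentiable fun x ↦ ?_⟩
  rw [← NNReal.coe_le_coe, coe_nnnorm]
  simpa [norm_iteratedFDeriv_one] using hC x

lemma integrable_id_smul_schwartzMap (g : 𝓢(ℝ, E)) (μ : Measure ℝ) [μ.HasTemperateGrowth] :
    Integrable (fun x ↦ x • g x) μ := by
  refine (integrable_norm_iff (continuous_id.smul g.continuous).aestronglyMeasurable).1 ?_
  simpa [norm_smul] using g.integrable_pow_mul μ 1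

end Schwartz

section LevyWeight

/-- The density `u ^ (-1 - α)` of the `α`-stable Lévy measure on `(0, ∞)`, multiplied by the
factor `min 1 (u ^ 2)` that makes it integrable for `0 < α < 2`. -/
noncomputable def levyWeight (α u : ℝ) : ℝ := min 1 (u ^ 2) * u ^ (-1 - α)

variable {α : ℝ}

lemma levyWeight_nonneg (α : ℝ) {u : ℝ} (hu : 0 ≤ u) : 0 ≤ levyWeight α u := by
  unfold levyWeight; positivity

lemma levyWeight_of_le_one {u : ℝ} (hu : 0 < u) (hu1 : u ≤ 1) :
    levyWeight α u = u ^ (1 - α) := by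
  rw [levyWeight, min_eq_right (pow_le_one₀ hu.le hu1), ← Real.rpow_two, ← Real.rpow_add hu]
  ring_nf

lemma levyWeight_of_one_le {u : ℝ} (hu : 1 ≤ u) : levyWeight α u = u ^ (-1 - α) := by
  rw [levyWeight, min_eq_left (one_le_pow₀ hu), one_mul]

lemma integrableOn_levyWeight (hα : 0 < α) (hα2 : α < 2) :
    IntegrableOn (levyWeight α) (Ioi 0) := by
  rw [← Ioc_union_Ioi_eq_Ioi zero_le_one]
  refine IntegrableOn.union ?_ ?_
  · have hpow : IntegrableOn (fun u : ℝ ↦ u ^ (1 - α)) (Ioc 0 1) :=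
      (intervalIntegrable_iff_integrableOn_Ioc_of_le zero_le_one).1
        (intervalIntegral.intervalIntegrable_rpow' (by linarith))
    exact hpow.congr_fun (fun u hu ↦ (levyWeight_of_le_one hu.1 hu.2).symm) measurableSet_Ioc
  · exact (integrableOn_Ioi_rpow_of_lt (by linarith) one_pos).congr_fun
      (fun u hu ↦ (levyWeight_of_one_le (le_of_lt hu)).symm) measurableSet_Ioi

variable {E : Type*} [NormedAddCommGroup E] [NormedSpace ℝ E]

lemma norm_rpow_smul_le_levyWeight {a : E} {C u : ℝ} (hu : 0 ≤ u)
    (ha : ‖a‖ ≤ C * min 1 (u ^ 2)) : ‖u ^ (-1 - α) • a‖ ≤ C * levyWeight α u := by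
  rw [norm_smul, Real.norm_of_nonneg (by positivity), levyWeight, ← mul_assoc, mul_comm]
  gcongr

end LevyWeight

section FracDeriv

variable {E : Type*} [NormedAddCommGroup E] [NormedSpace ℝ E] {α : ℝ} {g : ℝ → E}

/-- The fractional derivative of order `α - 1` by symmetric differences, without its normalising
constant: up to a factor, its Fourier multiplier is `i * sgn ξ * |ξ| ^ (α - 1)`. -/
noncomputable def fracDeriv (α : ℝ) (g : ℝ → E) (x : ℝ) : E :=
  ∫ u in Ioi (0 : ℝ), u ^ (-α) • (g (x + u) - g (x - u))

lemma stronglyMeasurable_fracDeriv (α : ℝ) (hg : Continuous g) :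
    StronglyMeasurable (fracDeriv α g) := by
  refine StronglyMeasurable.integral_prod_right
    (f := fun x u : ℝ ↦ u ^ (-α) • (g (x + u) - g (x - u))) ?_
  have hpow : Measurable fun p : ℝ × ℝ ↦ p.2 ^ (-α) := by fun_prop
  have hdiff : Continuous fun p : ℝ × ℝ ↦ g (p.1 + p.2) - g (p.1 - p.2) := by fun_prop
  exact hpow.stronglyMeasurable.smul hdiff.stronglyMeasurable

lemma norm_rpow_smul_sub_le {K : ℝ≥0} (hg : LipschitzWith K g) (hα : 0 ≤ α) (x : ℝ) {u : ℝ}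
    (hu : 0 < u) : ‖u ^ (-α) • (g (x + u) - g (x - u))‖ ≤
      2 * K * levyWeight α u + (‖g (x + u)‖ + ‖g (x - u)‖) := by
  rw [norm_smul, Real.norm_of_nonneg (by positivity)]
  rcases le_total u 1 with hu1 | hu1
  · have hlip : ‖g (x + u) - g (x - u)‖ ≤ K * (2 * u) := by
      have := hg.norm_sub_le (x + u) (x - u)
      rwa [add_sub_sub_cancel, ← two_mul, Real.norm_of_nonneg (by positivity)] at this
    calc u ^ (-α) * ‖g (x + u) - g (x - u)‖
      _ ≤ u ^ (-α) * (K * (2 * u)) := by gcongr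
      _ = 2 * K * u ^ (1 - α) := by
        rw [sub_eq_add_neg, Real.rpow_add hu, Real.rpow_one]; ring
      _ = 2 * K * levyWeight α u := by rw [levyWeight_of_le_one hu hu1]
      _ ≤ _ := le_add_of_nonneg_right (by positivity)
  · calc u ^ (-α) * ‖g (x + u) - g (x - u)‖
      _ ≤ 1 * (‖g (x + u)‖ + ‖g (x - u)‖) := by
        gcongr
        · exact Real.rpow_le_one_of_one_le_of_nonpos hu1 (neg_nonpos.2 hα)
        · exact norm_sub_le _ _
      _ = ‖g (x + u)‖ + ‖g (x - u)‖ := one_mul _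
      _ ≤ _ := le_add_of_nonneg_left (mul_nonneg (by positivity) (levyWeight_nonneg α hu.le))

lemma integrableOn_fracDeriv {K : ℝ≥0} (hg : LipschitzWith K g) (hgi : Integrable g)
    (hα : 0 < α) (hα2 : α < 2) (x : ℝ) :
    IntegrableOn (fun u ↦ u ^ (-α) • (g (x + u) - g (x - u))) (Ioi 0) := by
  have htails := (hgi.comp_add_left x).norm.add (hgi.comp_sub_left x).norm
  refine (((integrableOn_levyWeight hα hα2).const_mul (2 * K)).add htails.integrableOn).mono' ?_
    ((ae_restrict_iff' measurableSet_Ioi).2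
      (.of_forall fun u hu ↦ norm_rpow_smul_sub_le hg hα.le x hu))
  have hpow : Measurable fun u : ℝ ↦ u ^ (-α) := by fun_prop
  have hcont := hg.continuous
  have hdiff : Continuous fun u ↦ g (x + u) - g (x - u) := by fun_prop
  exact hpow.aestronglyMeasurable.smul hdiff.aestronglyMeasurable

lemma norm_fracDeriv_le {K : ℝ≥0} (hg : LipschitzWith K g) (hgi : Integrable g)
    (hα : 0 < α) (hα2 : α < 2) (x : ℝ) :
    ‖fracDeriv α g x‖ ≤ 2 * K * (∫ u in Ioi 0, levyWeight α u) + 2 * ∫ y, ‖g y‖ := by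
  have hweight := (integrableOn_levyWeight hα hα2).const_mul (2 * K)
  have hright : Integrable fun u ↦ ‖g (x + u)‖ := (hgi.comp_add_left x).norm
  have hleft : Integrable fun u ↦ ‖g (x - u)‖ := (hgi.comp_sub_left x).norm
  have htails : Integrable fun u ↦ ‖g (x + u)‖ + ‖g (x - u)‖ := hright.add hleft
  calc ‖fracDeriv α g x‖
    _ ≤ ∫ u in Ioi 0, (2 * K * levyWeight α u + (‖g (x + u)‖ + ‖g (x - u)‖)) :=
      norm_integral_le_of_norm_le (hweight.add htails.integrableOn)
        ((ae_restrict_iff' measurableSet_Ioi).2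
          (.of_forall fun u hu ↦ norm_rpow_smul_sub_le hg hα.le x hu))
    _ = 2 * K * (∫ u in Ioi 0, levyWeight α u) +
        ∫ u in Ioi 0, (‖g (x + u)‖ + ‖g (x - u)‖) := by
      rw [integral_add hweight htails.integrableOn, integral_const_mul]
    _ ≤ 2 * K * (∫ u in Ioi 0, levyWeight α u) + ∫ u, (‖g (x + u)‖ + ‖g (x - u)‖) :=
      add_le_add le_rfl (setIntegral_le_integral htails (.of_forall fun u ↦ by positivity))
    _ = 2 * K * (∫ u in Ioi 0, levyWeight α u) + 2 * ∫ y, ‖g y‖ := by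
      rw [integral_add hright hleft, integral_add_left_eq_self (fun u ↦ ‖g u‖),
        integral_sub_left_eq_self (fun u ↦ ‖g u‖), ← two_mul]

lemma integrable_fracDeriv {K : ℝ≥0} (hg : LipschitzWith K g) (hgi : Integrable g)
    (hα : 0 < α) (hα2 : α < 2) (μ : Measure ℝ) [IsFiniteMeasure μ] :
    Integrable (fracDeriv α g) μ :=
  (integrable_const _).mono' (stronglyMeasurable_fracDeriv α hg.continuous).aestronglyMeasurable
    (.of_forall (norm_fracDeriv_le hg hgi hα hα2))

lemma fracDeriv_sub_comp_neg
    (hg : ∀ x, IntegrableOn (fun u ↦ u ^ (-α) • (g (x + u) - g (x - u))) (Ioi 0)) (x : ℝ) :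
    fracDeriv α (fun y ↦ g y - g (-y)) x = fracDeriv α g x + fracDeriv α g (-x) := by
  rw [fracDeriv, fracDeriv, fracDeriv, ← integral_add (hg x) (hg (-x))]
  congr with u
  rw [← smul_add, neg_add', neg_sub', sub_neg_eq_add]
  congr 1
  abel

lemma fracDeriv_clm_comp [CompleteSpace E] {F : Type*} [NormedAddCommGroup F] [NormedSpace ℝ F]
    [CompleteSpace F] (L : E →L[ℝ] F) {x : ℝ}
    (hg : IntegrableOn (fun u ↦ u ^ (-α) • (g (x + u) - g (x - u))) (Ioi 0)) :
    fracDeriv α (fun y ↦ L (g y)) x = L (fracDeriv α g x) := by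
  rw [fracDeriv, fracDeriv, ← L.integral_comp_comm hg]
  simp only [map_smul, map_sub]

end FracDeriv

section FracLaplacian

variable {E : Type*} [NormedAddCommGroup E] [NormedSpace ℝ E] {α : ℝ} {G g : ℝ → E}

/-- The symmetric second difference of `G` at `x` with step `u`. -/
def secondDiff (G : ℝ → E) (x u : ℝ) : E := G (x + u) + G (x - u) - (2 : ℝ) • G x

/-- The singular-integral form of the fractional Laplacian `-(-Δ) ^ (α / 2)`, without its
normalising constant; `m` times it is the generator of the symmetric `α`-stable process with Lévy
density `m * |u| ^ (-1 - α)`. -/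
noncomputable def fracLaplacian (α : ℝ) (G : ℝ → E) (x : ℝ) : E :=
  ∫ u in Ioi (0 : ℝ), u ^ (-1 - α) • secondDiff G x u

lemma secondDiff_zero (G : ℝ → E) (x : ℝ) : secondDiff G x 0 = 0 := by
  simp [secondDiff, two_smul]

lemma hasDerivAt_secondDiff (hG : ∀ x, HasDerivAt G (g x) x) (x u : ℝ) :
    HasDerivAt (secondDiff G x) (g (x + u) - g (x - u)) u := by
  rw [sub_eq_add_neg]
  exact ((HasDerivAt.comp_const_add x u (hG _)).add
    (HasDerivAt.comp_const_sub x u (hG _))).sub_const _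

lemma norm_secondDiff_le_mul_sq {K : ℝ≥0} (hG : ∀ x, HasDerivAt G (g x) x)
    (hg : LipschitzWith K g) (x : ℝ) {u : ℝ} (hu : 0 ≤ u) :
    ‖secondDiff G x u‖ ≤ 2 * K * u ^ 2 := by
  have hfirst : ∀ v ∈ Ico 0 u, ‖g (x + v) - g (x - v)‖ ≤ 2 * K * u := fun v hv ↦ by
    have := hg.norm_sub_le (x + v) (x - v)
    rw [add_sub_sub_cancel, ← two_mul, Real.norm_of_nonneg (by linarith [hv.1])] at this
    calc _ ≤ K * (2 * v) := this
      _ ≤ K * (2 * u) := by gcongr; exact hv.2.le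
      _ = 2 * K * u := by ring
  have hmean := norm_image_sub_le_of_norm_deriv_le_segment'
    (fun v _ ↦ (hasDerivAt_secondDiff hG x v).hasDerivWithinAt) hfirst u (right_mem_Icc.2 hu)
  rwa [secondDiff_zero, sub_zero, sub_zero, mul_assoc, ← sq] at hmean

lemma norm_secondDiff_le {B : ℝ} (hGB : ∀ x, ‖G x‖ ≤ B) (x u : ℝ) :
    ‖secondDiff G x u‖ ≤ 4 * B :=
  calc ‖secondDiff G x u‖
    _ ≤ ‖G (x + u)‖ + ‖G (x - u)‖ + ‖(2 : ℝ) • G x‖ :=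
      (norm_sub_le _ _).trans (by gcongr; exact norm_add_le _ _)
    _ = ‖G (x + u)‖ + ‖G (x - u)‖ + 2 * ‖G x‖ := by rw [norm_smul, Real.norm_two]
    _ ≤ 4 * B := by linarith [hGB (x + u), hGB (x - u), hGB x]

lemma norm_secondDiff_le_mul_min {B : ℝ} {K : ℝ≥0} (hG : ∀ x, HasDerivAt G (g x) x)
    (hg : LipschitzWith K g) (hGB : ∀ x, ‖G x‖ ≤ B) (x : ℝ) {u : ℝ} (hu : 0 ≤ u) :
    ‖secondDiff G x u‖ ≤ (4 * B + 2 * K) * min 1 (u ^ 2) := by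
  have hB : 0 ≤ B := (norm_nonneg _).trans (hGB x)
  rcases min_cases 1 (u ^ 2) with ⟨hmin, -⟩ | ⟨hmin, -⟩ <;> rw [hmin]
  · linarith [norm_secondDiff_le hGB x u, K.coe_nonneg]
  · nlinarith [norm_secondDiff_le_mul_sq hG hg x hu, mul_nonneg hB (sq_nonneg u)]

lemma integrableOn_fracLaplacian {B : ℝ} {K : ℝ≥0} (hG : ∀ x, HasDerivAt G (g x) x)
    (hg : LipschitzWith K g) (hGB : ∀ x, ‖G x‖ ≤ B) (hα : 0 < α) (hα2 : α < 2) (x : ℝ) :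
    IntegrableOn (fun u ↦ u ^ (-1 - α) • secondDiff G x u) (Ioi 0) := by
  refine ((integrableOn_levyWeight hα hα2).const_mul (4 * B + 2 * K)).mono' ?_
    ((ae_restrict_iff' measurableSet_Ioi).2 (.of_forall fun u hu ↦
      norm_rpow_smul_le_levyWeight (le_of_lt hu) (norm_secondDiff_le_mul_min hG hg hGB x hu.le)))
  have hpow : Measurable fun u : ℝ ↦ u ^ (-1 - α) := by fun_prop
  have hdiff : Continuous (secondDiff G x) :=
    continuous_iff_continuousAt.2 fun u ↦ (hasDerivAt_secondDiff hG x u).continuousAt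
  exact hpow.aestronglyMeasurable.smul hdiff.aestronglyMeasurable

lemma tendsto_rpow_smul_secondDiff_nhdsGT {K : ℝ≥0} (hG : ∀ x, HasDerivAt G (g x) x)
    (hg : LipschitzWith K g) (hα2 : α < 2) (x : ℝ) :
    Tendsto (fun u ↦ u ^ (-α) • secondDiff G x u) (𝓝[>] 0) (𝓝 0) := by
  have hbound : ∀ᶠ u in 𝓝[>] (0 : ℝ), ‖u ^ (-α) • secondDiff G x u‖ ≤ 2 * K * u ^ (2 - α) := by
    filter_upwards [self_mem_nhdsWithin] with u hu
    rw [norm_smul, Real.norm_of_nonneg (Real.rpow_nonneg (le_of_lt hu) _), sub_eq_neg_add,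
      Real.rpow_add hu, Real.rpow_two, mul_left_comm]
    gcongr
    · exact Real.rpow_nonneg (le_of_lt hu) _
    · exact norm_secondDiff_le_mul_sq hG hg x (le_of_lt hu)
  have hpow : Tendsto (fun u : ℝ ↦ u ^ (2 - α)) (𝓝[>] 0) (𝓝 0) := by
    have := (Real.continuousAt_rpow_const 0 (2 - α) (.inr (by linarith))).tendsto
    rw [Real.zero_rpow (by linarith)] at this
    exact this.mono_left nhdsWithin_le_nhds
  exact squeeze_zero_norm' hbound (by simpa using hpow.const_mul (2 * (K : ℝ)))

lemma tendsto_rpow_smul_secondDiff_atTop {B : ℝ} (hGB : ∀ x, ‖G x‖ ≤ B) (hα : 0 < α) (x : ℝ) :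
    Tendsto (fun u ↦ u ^ (-α) • secondDiff G x u) atTop (𝓝 0) := by
  have hbound : ∀ᶠ u in atTop, ‖u ^ (-α) • secondDiff G x u‖ ≤ u ^ (-α) * (4 * B) := by
    filter_upwards [eventually_ge_atTop 0] with u hu
    rw [norm_smul, Real.norm_of_nonneg (by positivity)]
    gcongr
    exact norm_secondDiff_le hGB x u
  exact squeeze_zero_norm' hbound (by simpa using (tendsto_rpow_neg_atTop hα).mul_const (4 * B))

theorem fracDeriv_eq_smul_fracLaplacian [CompleteSpace E] {B : ℝ} {K : ℝ≥0}
    (hG : ∀ x, HasDerivAt G (g x) x) (hg : LipschitzWith K g) (hgi : Integrable g)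
    (hGB : ∀ x, ‖G x‖ ≤ B) (hα : 0 < α) (hα2 : α < 2) (x : ℝ) :
    fracDeriv α g x = α • fracLaplacian α G x := by
  have hderiv : ∀ u ∈ Ioi (0 : ℝ), HasDerivAt (fun u ↦ u ^ (-α) • secondDiff G x u)
      (u ^ (-α) • (g (x + u) - g (x - u)) - α • u ^ (-1 - α) • secondDiff G x u) u := by
    intro u hu
    have hprod := (Real.hasDerivAt_rpow_const (p := -α) (.inl (ne_of_gt hu))).fun_smul
      (hasDerivAt_secondDiff hG x u)
    rwa [neg_mul, neg_smul, mul_smul, ← sub_eq_add_neg, neg_sub_comm] at hprod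
  have hcont : ContinuousWithinAt (fun u ↦ u ^ (-α) • secondDiff G x u) (Ici 0) 0 := by
    rw [← continuousWithinAt_Ioi_iff_Ici, ContinuousWithinAt, secondDiff_zero, smul_zero]
    exact tendsto_rpow_smul_secondDiff_nhdsGT hG hg hα2 x
  have hfirst := integrableOn_fracDeriv hg hgi hα hα2 x
  have hsecond := (integrableOn_fracLaplacian hG hg hGB hα hα2 x).fun_smul α
  have hparts := integral_Ioi_of_hasDerivAt_of_tendsto hcont hderiv (hfirst.sub hsecond)
    (tendsto_rpow_smul_secondDiff_atTop hGB hα x)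
  rw [integral_sub hfirst hsecond, integral_smul, secondDiff_zero, smul_zero, sub_zero] at hparts
  exact sub_eq_zero.1 hparts

end FracLaplacian

section StableExponent

variable {α : ℝ}

/-- The Lévy–Khintchine integral of the symmetric `α`-stable law: the law with Lévy measure
`m * |u| ^ (-1 - α)` has characteristic exponent `2 * m * stableExponent α`. -/
noncomputable def stableExponent (α t : ℝ) : ℝ :=
  ∫ u in Ioi (0 : ℝ), (Real.cos (t * u) - 1) * u ^ (-1 - α)

lemma stableExponent_zero (α : ℝ) : stableExponent α 0 = 0 := by
  simp [stableExponent]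

lemma stableExponent_neg (α t : ℝ) : stableExponent α (-t) = stableExponent α t := by
  simp [stableExponent]

lemma stableExponent_mul {s : ℝ} (hs : 0 < s) (α t : ℝ) :
    stableExponent α (s * t) = s ^ α * stableExponent α t := by
  have hscale : ∀ u ∈ Ioi (0 : ℝ), (Real.cos (s * t * u) - 1) * u ^ (-1 - α) =
      s ^ (1 + α) * ((Real.cos (t * (s * u)) - 1) * (s * u) ^ (-1 - α)) := by
    intro u hu
    rw [Real.mul_rpow hs.le (le_of_lt hu), show -1 - α = -(1 + α) by ring, Real.rpow_neg hs.le]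
    field_simp
  rw [stableExponent, setIntegral_congr_fun measurableSet_Ioi hscale, integral_const_mul,
    integral_comp_mul_left_Ioi (fun u ↦ (Real.cos (t * u) - 1) * u ^ (-1 - α)) 0 hs, mul_zero,
    smul_eq_mul, ← mul_assoc, ← stableExponent, add_comm, Real.rpow_add_one hs.ne',
    mul_inv_cancel_right₀ hs.ne']

lemma stableExponent_eq (hα : 0 < α) (t : ℝ) :
    stableExponent α t = |t| ^ α * stableExponent α 1 := by
  have habs : stableExponent α t = stableExponent α |t| := by
    rcases abs_choice t with h | h <;> simp only [h, stableExponent_neg]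
  rcases eq_or_ne t 0 with rfl | ht
  · rw [stableExponent_zero, abs_zero, Real.zero_rpow hα.ne', zero_mul]
  · rw [habs, ← stableExponent_mul (abs_pos.2 ht), mul_one]

lemma continuous_stableExponent (hα : 0 < α) : Continuous (stableExponent α) := by
  rw [funext (stableExponent_eq hα)]
  exact (continuous_abs.rpow_const fun _ ↦ .inr hα.le).mul_const _

lemma abs_stableExponent_le (hα : 0 < α) (hα2 : α < 2) (t : ℝ) :
    |stableExponent α t| ≤ |stableExponent α 1| * (1 + t ^ 2) := by
  have hpow : |t| ^ α ≤ 1 + t ^ 2 := by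
    rcases le_total |t| 1 with ht | ht
    · linarith [Real.rpow_le_one (abs_nonneg t) ht hα.le, sq_nonneg t]
    · have := Real.rpow_le_rpow_of_exponent_le ht hα2.le
      rw [Real.rpow_two, sq_abs] at this
      linarith
  rw [stableExponent_eq hα, abs_mul, abs_of_nonneg (by positivity), mul_comm]
  gcongr

lemma norm_cos_mul_sub_one_le (t u : ℝ) :
    ‖Real.cos (t * u) - 1‖ ≤ 2 * (1 + t ^ 2) * min 1 (u ^ 2) := by
  have hsq := Real.one_sub_sq_div_two_le_cos (x := t * u)
  have hle := Real.cos_le_one (t * u)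
  have hge := Real.neg_one_le_cos (t * u)
  rw [Real.norm_of_nonpos (by linarith)]
  rcases min_cases 1 (u ^ 2) with ⟨hmin, -⟩ | ⟨hmin, -⟩ <;> rw [hmin]
  · linarith [sq_nonneg t]
  · nlinarith [sq_nonneg u, sq_nonneg (t * u)]

lemma integrable_one_add_sq_mul_norm {E : Type*} [NormedAddCommGroup E] {f : ℝ → E}
    (hf : Integrable f) (hf2 : Integrable fun v ↦ v ^ 2 * ‖f v‖) (c : ℝ) :
    Integrable fun v ↦ (1 + (c * v) ^ 2) * ‖f v‖ :=
  (hf.norm.add (hf2.const_mul (c ^ 2))).congr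
    (.of_forall fun v ↦ by simp only [Pi.add_apply]; ring)

variable {E : Type*} [NormedAddCommGroup E] [NormedSpace ℝ E] {f : ℝ → E}

lemma integrable_prod_cos_mul_sub_one_smul (hα : 0 < α) (hα2 : α < 2) (hf : Integrable f)
    (hf2 : Integrable fun v ↦ v ^ 2 * ‖f v‖) (c : ℝ) :
    Integrable (fun p : ℝ × ℝ ↦ ((Real.cos (c * p.2 * p.1) - 1) * p.1 ^ (-1 - α)) • f p.2)
      ((volume.restrict (Ioi 0)).prod volume) := by
  refine (((integrableOn_levyWeight hα hα2).const_mul 2).mul_prod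
    (integrable_one_add_sq_mul_norm hf hf2 c)).mono' ?_ ?_
  · have hkernel : Measurable fun p : ℝ × ℝ ↦
        (Real.cos (c * p.2 * p.1) - 1) * p.1 ^ (-1 - α) := by fun_prop
    exact hkernel.aestronglyMeasurable.smul hf.1.comp_snd
  · filter_upwards [Measure.quasiMeasurePreserving_fst.ae (ae_restrict_mem measurableSet_Ioi)]
      with p hp
    have hkernel := norm_rpow_smul_le_levyWeight (α := α) (le_of_lt hp)
      (norm_cos_mul_sub_one_le (c * p.2) p.1)
    calc ‖((Real.cos (c * p.2 * p.1) - 1) * p.1 ^ (-1 - α)) • f p.2‖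
      _ = ‖p.1 ^ (-1 - α) • (Real.cos (c * p.2 * p.1) - 1)‖ * ‖f p.2‖ := by
        rw [norm_smul, smul_eq_mul, mul_comm (p.1 ^ _)]
      _ ≤ 2 * (1 + (c * p.2) ^ 2) * levyWeight α p.1 * ‖f p.2‖ := by gcongr
      _ = 2 * levyWeight α p.1 * ((1 + (c * p.2) ^ 2) * ‖f p.2‖) := by ring

lemma integral_integral_cos_mul_sub_one_smul [CompleteSpace E] (hα : 0 < α) (hα2 : α < 2)
    (hf : Integrable f) (hf2 : Integrable fun v ↦ v ^ 2 * ‖f v‖) (c : ℝ) :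
    ∫ u in Ioi 0, ∫ v, ((Real.cos (c * v * u) - 1) * u ^ (-1 - α)) • f v =
      ∫ v, stableExponent α (c * v) • f v := by
  rw [integral_integral_swap (integrable_prod_cos_mul_sub_one_smul hα hα2 hf hf2 c)]
  simp only [integral_smul_const, stableExponent]

lemma integrable_stableExponent_smul (hα : 0 < α) (hα2 : α < 2) (hf : Integrable f)
    (hf2 : Integrable fun v ↦ v ^ 2 * ‖f v‖) (c : ℝ) :
    Integrable fun v ↦ stableExponent α (c * v) • f v := by
  refine ((integrable_one_add_sq_mul_norm hf hf2 c).const_mul |stableExponent α 1|).mono' ?_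
    (.of_forall fun v ↦ ?_)
  · exact ((continuous_stableExponent hα).comp (continuous_const_mul c)).aestronglyMeasurable.smul
      hf.1
  · rw [norm_smul, ← mul_assoc]
    gcongr
    exact abs_stableExponent_le hα hα2 _

end StableExponent

section Fourier

variable {V : Type*} [NormedAddCommGroup V] [InnerProductSpace ℝ V] [MeasurableSpace V]
  [BorelSpace V] {E : Type*} [NormedAddCommGroup E] [NormedSpace ℂ E]

theorem integral_fourierInv_eq_integral_charFun_smul [FiniteDimensional ℝ V] [CompleteSpace E]
    (μ : Measure V) [IsFiniteMeasure μ] {f : V → E} (hf : Integrable f) :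
    ∫ x, 𝓕⁻ f x ∂μ = ∫ v, charFun μ ((2 * π) • v) • f v := by
  have hint : Integrable (fun p : V × V ↦
      Complex.exp ((2 * π * inner ℝ p.2 p.1 : ℝ) * Complex.I) • f p.2) (μ.prod volume) :=
    (hf.comp_snd μ).bdd_smul 1 (Continuous.aestronglyMeasurable (by fun_prop))
      (.of_forall fun p ↦ (Complex.norm_exp_ofReal_mul_I _).le)
  simp only [Real.fourierInv_eq']
  rw [integral_integral_swap hint]
  simp only [integral_smul_const, charFun_apply, inner_smul_right, real_inner_comm]

lemma integrable_exp_inner_smul {ν : Measure V} {f : V → E} (hf : Integrable f ν) (w : V) :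
    Integrable (fun v ↦ Complex.exp ((2 * π * inner ℝ v w : ℝ) * Complex.I) • f v) ν :=
  hf.bdd_smul 1 (Continuous.aestronglyMeasurable (by fun_prop))
    (.of_forall fun _ ↦ (Complex.norm_exp_ofReal_mul_I _).le)

lemma secondDiff_fourierInv {f : ℝ → E} (hf : Integrable f) (x u : ℝ) :
    secondDiff (𝓕⁻ f) x u =
      𝓕⁻ (fun v ↦ (2 * (Real.cos (2 * π * v * u) - 1)) • f v) x := by
  have hadd := integrable_exp_inner_smul hf (x + u)
  have hsub := integrable_exp_inner_smul hf (x - u)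
  simp only [secondDiff, Real.fourierInv_eq']
  rw [← integral_add hadd hsub, ← integral_smul,
    ← integral_sub (hadd.fun_add hsub) ((integrable_exp_inner_smul hf x).fun_smul _)]
  congr with v
  have hplus : Complex.exp ((2 * π * inner ℝ v (x + u) : ℝ) * Complex.I) =
      Complex.exp ((2 * π * inner ℝ v x : ℝ) * Complex.I) *
        Complex.exp ((2 * π * v * u : ℝ) * Complex.I) := by
    rw [← Complex.exp_add, inner_add_right, Real.inner_apply v u]
    push_cast; ring_nf
  have hminus : Complex.exp ((2 * π * inner ℝ v (x - u) : ℝ) * Complex.I) =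
      Complex.exp ((2 * π * inner ℝ v x : ℝ) * Complex.I) *
        Complex.exp (-(2 * π * v * u : ℝ) * Complex.I) := by
    rw [← Complex.exp_add, inner_sub_right, Real.inner_apply v u]
    push_cast; ring_nf
  rw [hplus, hminus, ← Complex.coe_smul, ← Complex.coe_smul, smul_smul, smul_smul, ← add_smul,
    ← sub_smul]
  push_cast [Complex.cos]
  ring_nf

theorem fracLaplacian_fourierInv [CompleteSpace E] {α : ℝ} (hα : 0 < α) (hα2 : α < 2)
    {f : ℝ → E} (hf : Integrable f) (hf2 : Integrable fun v ↦ v ^ 2 * ‖f v‖) (x : ℝ) :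
    fracLaplacian α (𝓕⁻ f) x =
      𝓕⁻ (fun v ↦ (2 * stableExponent α (2 * π * v)) • f v) x := by
  set e : ℝ → E := fun v ↦
    (2 : ℝ) • Complex.exp ((2 * π * inner ℝ v x : ℝ) * Complex.I) • f v
  have he : Integrable e := (integrable_exp_inner_smul hf x).smul 2
  have he2 : Integrable fun v ↦ v ^ 2 * ‖e v‖ := by
    simpa only [e, norm_smul, Complex.norm_exp_ofReal_mul_I, one_mul, mul_left_comm] using
      hf2.const_mul ‖(2 : ℝ)‖
  calc fracLaplacian α (𝓕⁻ f) x
    _ = ∫ u in Ioi 0, ∫ v, ((Real.cos (2 * π * v * u) - 1) * u ^ (-1 - α)) • e v := by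
      simp only [fracLaplacian, secondDiff_fourierInv hf, Real.fourierInv_eq', ← integral_smul]
      congr with u
      congr with v
      rw [smul_comm (Complex.exp _), smul_smul, smul_smul]
      congr 1
      ring
    _ = ∫ v, stableExponent α (2 * π * v) • e v :=
      integral_integral_cos_mul_sub_one_smul hα hα2 he he2 _
    _ = 𝓕⁻ (fun v ↦ (2 * stableExponent α (2 * π * v)) • f v) x := by
      rw [Real.fourierInv_eq']
      congr with v
      rw [smul_smul, mul_comm, smul_comm]

end Fourier

section Derivative

variable {E : Type*} [NormedAddCommGroup E] [NormedSpace ℝ E]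

lemma hasDerivAt_integral_comp_mul (μ : Measure ℝ) [IsFiniteMeasure μ] {G g : ℝ → E}
    (hG : ∀ x, HasDerivAt G (g x) x) (hg : Continuous g) {B C : ℝ} (hGB : ∀ x, ‖G x‖ ≤ B)
    (hgC : ∀ x, ‖x • g x‖ ≤ C) {s : ℝ} (hs : 0 < s) :
    HasDerivAt (fun r ↦ ∫ x, G (r * x) ∂μ) (∫ x, x • g (s * x) ∂μ) s := by
  have hGcont : Continuous G := continuous_iff_continuousAt.2 fun x ↦ (hG x).continuousAt
  refine (hasDerivAt_integral_of_dominated_loc_of_deriv_le (F := fun r x ↦ G (r * x))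
    (F' := fun r x ↦ x • g (r * x)) (bound := fun _ ↦ (s / 2)⁻¹ * C)
    (Ioi_mem_nhds (half_lt_self hs)) (.of_forall fun r ↦ ?_) ?_ ?_ (.of_forall fun x r hr ↦ ?_)
    (integrable_const _) (.of_forall fun x r _ ↦ ?_)).2
  · exact Continuous.aestronglyMeasurable (by fun_prop)
  · exact (integrable_const B).mono' (Continuous.aestronglyMeasurable (by fun_prop))
      (.of_forall fun x ↦ hGB _)
  · exact Continuous.aestronglyMeasurable (by fun_prop)
  · have hr0 : 0 < r := (half_pos hs).trans hr
    calc ‖x • g (r * x)‖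
      _ = r⁻¹ * ‖(r * x) • g (r * x)‖ := by
        rw [mul_smul, norm_smul r, Real.norm_of_nonneg hr0.le, inv_mul_cancel_left₀ hr0.ne']
      _ ≤ (s / 2)⁻¹ * C := by
        gcongr
        · exact le_of_lt hr
        · exact hgC _
  · exact (hG (r * x)).scomp r (hasDerivAt_mul_const x)

lemma hasDerivAt_integral_exp_mul_smul {X : Type*} [MeasurableSpace X] {ν : Measure X}
    {c : X → ℝ} {f : X → E} (hc : Measurable c) (hc0 : ∀ v, c v ≤ 0) (hf : Integrable f ν)
    (hcf : Integrable (fun v ↦ c v • f v) ν) {r : ℝ} (hr : 0 < r) :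
    HasDerivAt (fun r ↦ ∫ v, Real.exp (r * c v) • f v ∂ν)
      (∫ v, Real.exp (r * c v) • c v • f v ∂ν) r := by
  have hexp : ∀ r, 0 < r → ∀ v, ‖Real.exp (r * c v)‖ ≤ 1 := fun r hr v ↦ by
    rw [Real.norm_of_nonneg (Real.exp_nonneg _), Real.exp_le_one_iff]
    exact mul_nonpos_of_nonneg_of_nonpos hr.le (hc0 v)
  have hmeas : ∀ r, AEStronglyMeasurable (fun v ↦ Real.exp (r * c v)) ν := fun r ↦
    (hc.const_mul r).exp.aestronglyMeasurable
  refine (hasDerivAt_integral_of_dominated_loc_of_deriv_le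
    (F := fun r v ↦ Real.exp (r * c v) • f v) (F' := fun r v ↦ Real.exp (r * c v) • c v • f v)
    (Ioi_mem_nhds hr) (.of_forall fun r ↦ (hmeas r).smul hf.1)
    (hf.bdd_smul 1 (hmeas r) (.of_forall (hexp r hr))) ((hmeas r).smul hcf.1)
    (.of_forall fun v r hr ↦ ?_) hcf.norm (.of_forall fun v r _ ↦ ?_)).2
  · rw [norm_smul]
    exact mul_le_of_le_one_left (norm_nonneg _) (hexp r hr v)
  · simpa only [mul_smul] using (hasDerivAt_mul_const (c v)).exp.smul_const (f v)

lemma integral_add_comp_neg {X : Type*} [AddGroup X] [MeasurableSpace X] [MeasurableNeg X]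
    (μ : Measure X) [μ.IsNegInvariant] {F : X → E} (hF : Integrable F μ) :
    ∫ x, (F x + F (-x)) ∂μ = (2 : ℝ) • ∫ x, F x ∂μ := by
  rw [integral_add hF hF.comp_neg, integral_neg_eq_self, two_smul]

end Derivative

/-- `μ` is the symmetric `α`-stable law with Lévy measure `m * |u| ^ (-1 - α)` and location `0`,
expressed through its characteristic function. -/
def IsSymmetricStable (α m : ℝ) (μ : Measure ℝ) : Prop :=
  ∀ t, charFun μ t = Complex.exp ((2 * m * stableExponent α t : ℝ) : ℂ)

lemma isSymmetricStable_iff {α m : ℝ} {μ : Measure ℝ} :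
    IsSymmetricStable α m μ ↔ ∀ t : ℝ, ∫ x : ℝ, Complex.exp (Complex.I * t * x) ∂μ =
      Complex.exp ((2 * m * stableExponent α t : ℝ) : ℂ) := by
  simp only [IsSymmetricStable, charFun_apply_real, mul_assoc, mul_comm Complex.I]

namespace IsSymmetricStable

variable {α m : ℝ} {μ : Measure ℝ}

lemma exponent_nonpos [IsProbabilityMeasure μ] (hμ : IsSymmetricStable α m μ) (t : ℝ) :
    2 * m * stableExponent α t ≤ 0 := by
  have hnorm : ‖charFun μ t‖ ≤ 1 := norm_charFun_le_one t
  rwa [hμ, Complex.norm_exp_ofReal, Real.exp_le_one_iff] at hnorm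

lemma isNegInvariant [IsFiniteMeasure μ] (hμ : IsSymmetricStable α m μ) : μ.IsNegInvariant where
  neg_eq_self := by
    have hneg : μ.map (-1 * ·) = μ := Measure.ext_of_charFun <| funext fun t ↦ by
      rw [charFun_map_mul, hμ, hμ, neg_one_mul, stableExponent_neg]
    simp only [neg_one_mul] at hneg
    exact hneg

lemma map_mul (hμ : IsSymmetricStable α m μ) {s : ℝ} (hs : 0 < s) :
    IsSymmetricStable α (s ^ α * m) (μ.map (s * ·)) := fun t ↦ by
  rw [charFun_map_mul, hμ, stableExponent_mul hs]
  ring_nf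

section Complex

variable {E : Type*} [NormedAddCommGroup E] [NormedSpace ℂ E] [CompleteSpace E] {f : ℝ → E}

lemma integral_fourierInv [IsFiniteMeasure μ] (hμ : IsSymmetricStable α m μ)
    (hf : Integrable f) : ∫ x, 𝓕⁻ f x ∂μ =
      ∫ v, Real.exp (2 * m * stableExponent α (2 * π * v)) • f v := by
  simp only [integral_fourierInv_eq_integral_charFun_smul μ hf, hμ _, smul_eq_mul,
    ← Complex.ofReal_exp, Complex.coe_smul]

lemma integral_fourierInv_comp_mul [IsFiniteMeasure μ] (hμ : IsSymmetricStable α m μ)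
    (hf : Integrable f) {s : ℝ} (hs : 0 < s) : ∫ x, 𝓕⁻ f (s * x) ∂μ =
      ∫ v, Real.exp (s ^ α * (2 * m * stableExponent α (2 * π * v))) • f v := by
  rw [← (measurableEmbedding_mulLeft₀ hs.ne').integral_map, (hμ.map_mul hs).integral_fourierInv hf]
  simp only [mul_assoc, mul_left_comm]

lemma integral_fracLaplacian_fourierInv [IsFiniteMeasure μ] (hμ : IsSymmetricStable α m μ)
    (hα : 0 < α) (hα2 : α < 2) (hf : Integrable f) (hf2 : Integrable fun v ↦ v ^ 2 * ‖f v‖) :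
    m • ∫ x, fracLaplacian α (𝓕⁻ f) x ∂μ =
      ∫ v, Real.exp (2 * m * stableExponent α (2 * π * v)) •
        (2 * m * stableExponent α (2 * π * v)) • f v := by
  have hint : Integrable fun v ↦ (2 * stableExponent α (2 * π * v)) • f v := by
    simpa only [mul_smul] using
      (integrable_stableExponent_smul hα hα2 hf hf2 (2 * π)).fun_smul (2 : ℝ)
  simp only [fracLaplacian_fourierInv hα hα2 hf hf2]
  rw [hμ.integral_fourierInv hint, ← integral_smul]
  congr with v
  rw [smul_comm m, smul_smul m]
  ring_nf

theorem hasDerivAt_integral_fourierInv_comp_mul [IsProbabilityMeasure μ]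
    (hμ : IsSymmetricStable α m μ) (hα : 0 < α) (hα2 : α < 2) (hf : Integrable f)
    (hf2 : Integrable fun v ↦ v ^ 2 * ‖f v‖) :
    HasDerivAt (fun s ↦ ∫ x, 𝓕⁻ f (s * x) ∂μ)
      (α • m • ∫ x, fracLaplacian α (𝓕⁻ f) x ∂μ) 1 := by
  have hexp := hasDerivAt_integral_exp_mul_smul (r := (1 : ℝ) ^ α)
    (c := fun v ↦ 2 * m * stableExponent α (2 * π * v))
    (by have := continuous_stableExponent hα; fun_prop) (fun v ↦ hμ.exponent_nonpos _) hf
    (by simpa only [mul_smul] using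
      (integrable_stableExponent_smul hα hα2 hf hf2 (2 * π)).fun_smul (2 * m))
    (by positivity)
  have hpow := Real.hasDerivAt_rpow_const (x := 1) (p := α) (.inl one_ne_zero)
  have hcomp := hexp.scomp 1 hpow
  simp only [Real.one_rpow, mul_one, one_mul] at hcomp
  rw [hμ.integral_fracLaplacian_fourierInv hα hα2 hf hf2]
  refine hcomp.congr_of_eventuallyEq ?_
  filter_upwards [Ioi_mem_nhds one_pos] with s hs using hμ.integral_fourierInv_comp_mul hf hs

theorem integral_smul_eq_of_hasDerivAt_complex [IsProbabilityMeasure μ]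
    (hμ : IsSymmetricStable α m μ) (hα : 0 < α) (hα2 : α < 2) {G g : 𝓢(ℝ, E)}
    (hG : ∀ x, HasDerivAt G (g x) x) :
    ∫ x, x • g x ∂μ = m • ∫ x, fracDeriv α g x ∂μ := by
  obtain ⟨K, hg⟩ := exists_lipschitzWith_schwartzMap g
  have hfracDeriv := fracDeriv_eq_smul_fracLaplacian hG hg g.integrable (G.norm_le_seminorm ℝ)
    hα hα2
  have hfourier : 𝓕⁻ ⇑(𝓕 G : 𝓢(ℝ, E)) = G := by
    rw [← SchwartzMap.fourierInv_coe, FourierTransform.fourierInv_fourier_eq]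
  have hleft := hasDerivAt_integral_comp_mul μ hG g.continuous (G.norm_le_seminorm ℝ)
    (fun x ↦ by simpa [norm_smul] using g.norm_pow_mul_le_seminorm ℝ 1 x) one_pos
  have hright := hμ.hasDerivAt_integral_fourierInv_comp_mul hα hα2 (𝓕 G : 𝓢(ℝ, E)).integrable
    (by simpa using (𝓕 G : 𝓢(ℝ, E)).integrable_pow_mul volume 2)
  rw [hfourier] at hright
  simp only [one_mul] at hleft
  rw [hleft.unique hright]
  simp only [hfracDeriv, integral_smul]
  exact smul_comm _ _ _

end Complex

section Real

variable {E : Type*} [NormedAddCommGroup E] [NormedSpace ℝ E] [CompleteSpace E]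
  [IsProbabilityMeasure μ]

theorem integral_smul_eq_of_hasDerivAt (hμ : IsSymmetricStable α m μ) (hα : 0 < α)
    (hα2 : α < 2) {G g : 𝓢(ℝ, E)} (hG : ∀ x, HasDerivAt G (g x) x) :
    ∫ x, x • g x ∂μ = m • ∫ x, fracDeriv α g x ∂μ := by
  obtain ⟨K, hg⟩ := exists_lipschitzWith_schwartzMap g
  have hfracDeriv := integrable_fracDeriv hg g.integrable hα hα2 μ
  refine (SeparatingDual.eq_iff_forall_dual_eq (R := ℝ)).2 fun L ↦ Complex.ofReal_injective ?_
  set L' : E →L[ℝ] ℂ := Complex.ofRealCLM ∘L L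
  have hL' := hμ.integral_smul_eq_of_hasDerivAt_complex hα hα2
    (G := G.postcompCLM L') (g := g.postcompCLM L')
    fun x ↦ L'.hasFDerivAt.comp_hasDerivAt x (hG x)
  calc L' (∫ x, x • g x ∂μ)
    _ = ∫ x, x • L' (g x) ∂μ := by
      simp only [← L'.integral_comp_comm (integrable_id_smul_schwartzMap g μ), map_smul]
    _ = m • ∫ x, fracDeriv α (fun y ↦ L' (g y)) x ∂μ := hL'
    _ = L' (m • ∫ x, fracDeriv α g x ∂μ) := by
      simp only [map_smul, ← L'.integral_comp_comm hfracDeriv,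
        fracDeriv_clm_comp L' (integrableOn_fracDeriv hg g.integrable hα hα2 _)]

theorem integral_smul_eq (hμ : IsSymmetricStable α m μ) (hα : 0 < α) (hα2 : α < 2)
    (g : 𝓢(ℝ, E)) : ∫ x, x • g x ∂μ = m • ∫ x, fracDeriv α g x ∂μ := by
  have := hμ.isNegInvariant
  obtain ⟨K, hg⟩ := exists_lipschitzWith_schwartzMap g
  set r : 𝓢(ℝ, E) := SchwartzMap.compCLMOfContinuousLinearEquiv ℝ (ContinuousLinearEquiv.neg ℝ) g
  have hr : ∀ x, r x = g (-x) := fun _ ↦ rfl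
  have hzero : ∫ x, (g - r) x = 0 := by
    simp only [sub_apply, hr]
    rw [integral_sub g.integrable g.integrable.comp_neg, integral_neg_eq_self, sub_self]
  have hleft : ∀ x, x • (g - r) x = x • g x + -x • g (-x) := fun x ↦ by
    rw [sub_apply, hr, smul_sub, neg_smul, sub_eq_add_neg]
  have hright : ∀ x, fracDeriv α (g - r) x = fracDeriv α g x + fracDeriv α g (-x) :=
    fracDeriv_sub_comp_neg (integrableOn_fracDeriv hg g.integrable hα hα2)
  obtain ⟨G, hG⟩ := exists_schwartzMap_hasDerivAt (g - r) hzero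
  have hodd := hμ.integral_smul_eq_of_hasDerivAt hα hα2 hG
  simp only [hleft, hright] at hodd
  rw [integral_add_comp_neg μ (integrable_id_smul_schwartzMap g μ),
    integral_add_comp_neg μ (integrable_fracDeriv hg g.integrable hα hα2 μ), smul_comm] at hodd
  exact smul_right_injective E two_ne_zero hodd

end Real

end IsSymmetricStable

theorem stmt_9_general {E : Type*} [NormedAddCommGroup E] [NormedSpace ℝ E] [CompleteSpace E]
    {α m : ℝ} (hα : 0 < α) (hα2 : α < 2) {μ : Measure ℝ} [IsProbabilityMeasure μ]
    (hμ : IsSymmetricStable α m μ) (g : 𝓢(ℝ, E)) :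
    Integrable (fun x ↦ x • g x) μ ∧
    (∀ x, IntegrableOn (fun u ↦ u ^ (-α) • (g (x + u) - g (x - u))) (Ioi 0)) ∧
    Integrable (fun x ↦ fracDeriv α g x) μ ∧
    ∫ x, x • g x ∂μ = m • ∫ x, fracDeriv α g x ∂μ := by
  obtain ⟨K, hg⟩ := exists_lipschitzWith_schwartzMap g
  exact ⟨integrable_id_smul_schwartzMap g μ, integrableOn_fracDeriv hg g.integrable hα hα2,
    integrable_fracDeriv hg g.integrable hα hα2 μ, hμ.integral_smul_eq hα hα2 g⟩

theorem stmt_9 (α m : ℝ) (hα : 0 < α) (hα2 : α < 2) (hm : 0 < m)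
    (μ : Measure ℝ) [IsProbabilityMeasure μ]
    (hcf : ∀ t : ℝ, ∫ x : ℝ, Complex.exp (Complex.I * t * x) ∂μ =
      Complex.exp (((2 * m * ∫ u in Set.Ioi (0 : ℝ),
        (Real.cos (t * u) - 1) * u ^ (-1 - α) : ℝ) : ℂ)))
    (g : SchwartzMap ℝ ℝ) :
    Integrable (fun x : ℝ => x * g x) μ ∧
    (∀ x : ℝ, IntegrableOn (fun u : ℝ => (g (x + u) - g (x - u)) * u ^ (-α)) (Set.Ioi 0)) ∧
    Integrable (fun x : ℝ =>
      ∫ u in Set.Ioi (0 : ℝ), (g (x + u) - g (x - u)) * u ^ (-α)) μ ∧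
    ∫ x : ℝ, x * g x ∂μ =
      m * ∫ x : ℝ, (∫ u in Set.Ioi (0 : ℝ), (g (x + u) - g (x - u)) * u ^ (-α)) ∂μ := by
  simpa only [fracDeriv, smul_eq_mul, mul_comm] using
    stmt_9_general hα hα2 (isSymmetricStable_iff.2 hcf) g
end
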